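/- arXiv:1408.3325 — 2 statements merged into one kernel-verified Lean document; each statement's English description precedes it below -/
import Mathlib

section
/- For every two spanning cycles C₁=(V,E₁) and C₂=(V,E₂) on a common set V of n ≥ 3 vertices, there exists a RacSim drawing of C₁ and C₂ on an integer grid of size 2n×2n in which every edge of both cycles is drawn with at most one bend. -/
open SimpleGraph

/-- A polyline with `n` straight-line segments, given by its `n + 1` corner points. -/
structure Polyline where
  n : ℕ
  pts : Fin (n + 1) → ℝ × ℝ

namespace Polyline

/-- The first point of a polyline. -/
def first (P : Polyline) : ℝ × ℝ := P.pts 0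

/-- The last point of a polyline. -/
def last (P : Polyline) : ℝ × ℝ := P.pts (Fin.last P.n)

/-- The segments of a polyline, as ordered pairs of endpoints. -/
def segs (P : Polyline) : Set ((ℝ × ℝ) × (ℝ × ℝ)) :=
  {s | ∃ i : Fin P.n, s = (P.pts i.castSucc, P.pts i.succ)}

/-- The set of points covered by a polyline. -/
def curve (P : Polyline) : Set (ℝ × ℝ) :=
  ⋃ i : Fin P.n, segment ℝ (P.pts i.castSucc) (P.pts i.succ)

end Polyline

/-- Two segments are perpendicular: their direction vectors have zero dot product. -/
def SegPerp (s t : (ℝ × ℝ) × (ℝ × ℝ)) : Prop :=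
  (s.2.1 - s.1.1) * (t.2.1 - t.1.1) + (s.2.2 - s.1.2) * (t.2.2 - t.1.2) = 0

/-- Two segments cross: their relative interiors meet. -/
def SegCross (s t : (ℝ × ℝ) × (ℝ × ℝ)) : Prop :=
  (openSegment ℝ s.1 s.2 ∩ openSegment ℝ t.1 t.2).Nonempty

/-- A point has integer coordinates lying in `{1, …, a} × {1, …, b}`. -/
def OnGridPt (a b : ℤ) (p : ℝ × ℝ) : Prop :=
  ∃ x y : ℤ, p = ((x : ℝ), (y : ℝ)) ∧ 1 ≤ x ∧ x ≤ a ∧ 1 ≤ y ∧ y ≤ b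

/-- A simultaneous polyline drawing of the graphs `G 0, …, G (m - 1)` on a common
vertex set `V`: an injective placement of the vertices in the plane together with,
for each graph and each of its edges, a polyline joining the placements of the two
endpoints of the edge. -/
structure SimDrawing {V : Type} {m : ℕ} (G : Fin m → SimpleGraph V) where
  pos : V → ℝ × ℝ
  pos_injective : Function.Injective pos
  poly : Fin m → Sym2 V → Polyline
  joins : ∀ (i : Fin m) (a b : V), (G i).Adj a b →
    ((poly i s(a, b)).first = pos a ∧ (poly i s(a, b)).last = pos b) ∨
    ((poly i s(a, b)).first = pos b ∧ (poly i s(a, b)).last = pos a)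

namespace SimDrawing

variable {V : Type} {m : ℕ} {G : Fin m → SimpleGraph V} (D : SimDrawing G)

/-- (i) Each graph is drawn planar: the polylines of two distinct edges of the same
graph intersect only in points representing common endpoints. -/
def PlanarEach : Prop :=
  ∀ i : Fin m, ∀ e ∈ (G i).edgeSet, ∀ e' ∈ (G i).edgeSet, e ≠ e' →
    (D.poly i e).curve ∩ (D.poly i e').curve ⊆
      {p | ∃ v : V, v ∈ e ∧ v ∈ e' ∧ p = D.pos v}

/-- (ii) No two segments belonging to distinct edges overlap in more than one point. -/
def NoOverlaps : Prop :=
  ∀ i : Fin m, ∀ e ∈ (G i).edgeSet, ∀ j : Fin m, ∀ e' ∈ (G j).edgeSet,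
    (i ≠ j ∨ e ≠ e') →
      ∀ s ∈ (D.poly i e).segs, ∀ t ∈ (D.poly j e').segs,
        (segment ℝ s.1 s.2 ∩ segment ℝ t.1 t.2).Subsingleton

/-- (iii) Whenever segments of edges of two different graphs cross, they are
perpendicular at the crossing point. -/
def RightAngleCrossings : Prop :=
  ∀ i j : Fin m, i ≠ j → ∀ e ∈ (G i).edgeSet, ∀ e' ∈ (G j).edgeSet,
    ∀ s ∈ (D.poly i e).segs, ∀ t ∈ (D.poly j e').segs, SegCross s t → SegPerp s t

/-- A RacSim (RAC simultaneous) drawing: conditions (i), (ii) and (iii). -/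
def IsRacSim : Prop :=
  D.PlanarEach ∧ D.NoOverlaps ∧ D.RightAngleCrossings

/-- All vertex points and all corner points (hence all segment endpoints) of the
drawing lie on the integer grid `{1, …, a} × {1, …, b}`. -/
def OnGrid (a b : ℤ) : Prop :=
  (∀ v : V, OnGridPt a b (D.pos v)) ∧
    ∀ i : Fin m, ∀ e ∈ (G i).edgeSet, ∀ k : Fin ((D.poly i e).n + 1),
      OnGridPt a b ((D.poly i e).pts k)

/-- Every edge of the `i`-th graph is drawn with at most `k` bends, i.e. its
polyline consists of at most `k + 1` segments. -/
def BendsAtMost (i : Fin m) (k : ℕ) : Prop :=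
  ∀ e ∈ (G i).edgeSet, (D.poly i e).n ≤ k + 1

end SimDrawing

/-- The degree of a vertex of a graph. -/
noncomputable def vdeg {V : Type} (G : SimpleGraph V) (v : V) : ℕ := (G.neighborSet v).ncard

/-- A spanning cycle on a vertex set: a connected graph in which every vertex has
degree exactly 2 (a Hamiltonian cycle on the vertex set). -/
def IsSpanningCycle {V : Type} (G : SimpleGraph V) : Prop :=
  G.Connected ∧ ∀ v : V, vdeg G v = 2

/-!
Both cycles are numbered cyclically from a common vertex `v₀`, and a vertex with numbers `i` and `j`
is placed at `(2(i + 1), 2(j + 1))`. An edge of the first cycle leaves its tail vertically and, from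
one unit below the height of its head, approaches the head on a ramp of height one; edges of the
second cycle are drawn with the two coordinates exchanged.

Within the first cycle the edges between consecutive numbers occupy consecutive vertical strips,
and the closing edge is either on the last vertical line or below `v₀`, which is the lowest vertex.
Between the cycles, segments of the first have direction (even, odd) and segments of the second have
direction (odd, even), so the determinant of the two directions is odd and they are never parallel.
Ramps sweep an open strip between consecutive integers, so they avoid the vertical and horizontal
segments of the other cycle, which lie on even lines. Two ramps could only meet near a common head,
where they already share that point, or on the closing edge, whose ramp is below the second cycle;
this leaves only crossings of a vertical and a horizontal segment.
-/

section Segments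

variable {𝕜 E : Type*} [Field 𝕜] [LinearOrder 𝕜] [IsStrictOrderedRing 𝕜]
  [AddCommGroup E] [Module 𝕜 E]

theorem eq_right_of_mem_segment (f : E →ₗ[𝕜] 𝕜) {a b z : E} (hz : z ∈ segment 𝕜 a b)
    (hab : f a ≠ f b) (hzb : f z = f b) : z = b := by
  rw [segment_eq_image'] at hz
  obtain ⟨t, -, rfl⟩ := hz
  beta_reduce at hzb ⊢
  have ht : (t - 1) * (f b - f a) = 0 := by
    simp only [map_add, map_smul, map_sub, smul_eq_mul] at hzb
    linear_combination hzb
  have ht1 : t = 1 :=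
    sub_eq_zero.1 ((mul_eq_zero.1 ht).resolve_right (sub_ne_zero.2 hab.symm))
  rw [ht1, one_smul, add_sub_cancel]

theorem segment_inter_segment_subsingleton {a b c d : 𝕜 × 𝕜}
    (hdet : (b.1 - a.1) * (d.2 - c.2) - (b.2 - a.2) * (d.1 - c.1) ≠ 0) :
    (segment 𝕜 a b ∩ segment 𝕜 c d).Subsingleton := by
  rintro x ⟨hxab, hxcd⟩ y ⟨hyab, hycd⟩
  rw [segment_eq_image'] at hxab hxcd hyab hycd
  obtain ⟨t, -, rfl⟩ := hxab
  obtain ⟨u, -, rfl⟩ := hyab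
  obtain ⟨t', -, ht'⟩ := hxcd
  obtain ⟨u', -, hu'⟩ := hycd
  simp only [Prod.ext_iff, Prod.fst_add, Prod.snd_add, Prod.smul_fst, Prod.smul_snd,
    Prod.fst_sub, Prod.snd_sub, smul_eq_mul] at ht' hu'
  have htu : (t - u) * ((b.1 - a.1) * (d.2 - c.2) - (b.2 - a.2) * (d.1 - c.1)) = 0 := by
    linear_combination (d.2 - c.2) * (hu'.1 - ht'.1) - (d.1 - c.1) * (hu'.2 - ht'.2)
  rw [sub_eq_zero.1 ((mul_eq_zero.1 htu).resolve_right hdet)]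

theorem swap_mem_segment {a b z : 𝕜 × 𝕜} (hz : z ∈ segment 𝕜 a b) :
    z.swap ∈ segment 𝕜 a.swap b.swap :=
  image_segment 𝕜 (LinearMap.toAffineMap (LinearEquiv.prodComm 𝕜 𝕜 𝕜).toLinearMap) a b ▸
    Set.mem_image_of_mem _ hz

theorem swap_mem_openSegment {a b z : 𝕜 × 𝕜} (hz : z ∈ openSegment 𝕜 a b) :
    z.swap ∈ openSegment 𝕜 a.swap b.swap :=
  image_openSegment 𝕜 (LinearMap.toAffineMap (LinearEquiv.prodComm 𝕜 𝕜 𝕜).toLinearMap) a b ▸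
    Set.mem_image_of_mem _ hz

end Segments

theorem SegPerp.symm {s t : (ℝ × ℝ) × (ℝ × ℝ)} (h : SegPerp s t) : SegPerp t s := by
  unfold SegPerp at *
  linarith

theorem SegCross.symm {s t : (ℝ × ℝ) × (ℝ × ℝ)} (h : SegCross s t) : SegCross t s := by
  unfold SegCross at *
  rwa [Set.inter_comm]

theorem SegCross.map_swap {s t : (ℝ × ℝ) × (ℝ × ℝ)} (h : SegCross s t) :
    SegCross (s.map Prod.swap Prod.swap) (t.map Prod.swap Prod.swap) :=
  let ⟨z, hzs, hzt⟩ := h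
  ⟨z.swap, swap_mem_openSegment hzs, swap_mem_openSegment hzt⟩

namespace Polyline

theorem segment_subset_curve {P : Polyline} {s : (ℝ × ℝ) × (ℝ × ℝ)} (hs : s ∈ P.segs) :
    segment ℝ s.1 s.2 ⊆ P.curve := by
  obtain ⟨i, rfl⟩ := hs
  exact Set.subset_iUnion (fun i : Fin P.n => segment ℝ (P.pts i.castSucc) (P.pts i.succ)) i

/-- The polyline with end points `p` and `q` and a single bend at `b`. -/
def oneBend (p b q : ℝ × ℝ) : Polyline := ⟨2, ![p, b, q]⟩

variable {p b q z : ℝ × ℝ}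

theorem segs_oneBend : (oneBend p b q).segs = {(p, b), (b, q)} := by
  ext s
  exact Fin.exists_fin_two

theorem curve_oneBend : (oneBend p b q).curve = segment ℝ p b ∪ segment ℝ b q := by
  ext z
  exact Set.mem_iUnion.trans Fin.exists_fin_two

theorem oneBend_joins {V : Type*} (f : V → ℝ × ℝ) {u v a c : V} (h : s(u, v) = s(a, c)) :
    (oneBend (f u) b (f v)).first = f a ∧ (oneBend (f u) b (f v)).last = f c ∨
      (oneBend (f u) b (f v)).first = f c ∧ (oneBend (f u) b (f v)).last = f a := by
  rcases Sym2.eq_iff.1 h with ⟨rfl, rfl⟩ | ⟨rfl, rfl⟩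
  · exact Or.inl ⟨rfl, rfl⟩
  · exact Or.inr ⟨rfl, rfl⟩

/-- The polyline drawn for an edge of the first cycle with tail `p` and head `q`: a vertical
segment followed by a ramp that reaches `q` from one unit below. -/
def verticalArc (p q : ℝ × ℝ) : Polyline := oneBend p (p.1, q.2 - 1) q

/-- The polyline drawn for an edge of the second cycle with tail `p` and head `q`: the mirror image
of `verticalArc` under exchanging the coordinates. -/
def horizontalArc (p q : ℝ × ℝ) : Polyline := oneBend p (q.1 - 1, p.2) q

theorem map_swap_mem_segs_verticalArc {s : (ℝ × ℝ) × (ℝ × ℝ)}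
    (hs : s ∈ (horizontalArc p q).segs) :
    s.map Prod.swap Prod.swap ∈ (verticalArc p.swap q.swap).segs := by
  rw [horizontalArc, segs_oneBend] at hs
  rw [verticalArc, segs_oneBend]
  exact hs.imp (congrArg _) (congrArg _)

theorem swap_mem_curve_verticalArc (hz : z ∈ (horizontalArc p q).curve) :
    z.swap ∈ (verticalArc p.swap q.swap).curve := by
  rw [horizontalArc, curve_oneBend] at hz
  rw [verticalArc, curve_oneBend]
  exact hz.imp swap_mem_segment swap_mem_segment

end Polyline

open Polyline

section Planarity

variable {p q z : ℝ × ℝ}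

theorem fst_eq_of_mem_segment {x y y' : ℝ} (hz : z ∈ segment ℝ (x, y) (x, y')) : z.1 = x := by
  simpa using (Prod.segment_subset _ _ hz).1

theorem snd_mem_Icc_of_mem_ramp {x : ℝ} (hz : z ∈ segment ℝ (x, q.2 - 1) q) :
    z.2 ∈ Set.Icc (q.2 - 1) q.2 :=
  segment_eq_Icc (𝕜 := ℝ) (sub_one_lt q.2).le ▸ (Prod.segment_subset _ _ hz).2

theorem fst_mem_Icc_of_mem_verticalArc (hpq : p.1 ≤ q.1) (hz : z ∈ (verticalArc p q).curve) :
    z.1 ∈ Set.Icc p.1 q.1 := by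
  rw [verticalArc, curve_oneBend] at hz
  rcases hz with hz | hz
  · rw [fst_eq_of_mem_segment hz]
    exact Set.left_mem_Icc.2 hpq
  · exact segment_eq_Icc hpq ▸ (Prod.segment_subset _ _ hz).1

theorem eq_right_of_mem_verticalArc_of_fst_eq (hpq : p.1 ≠ q.1)
    (hz : z ∈ (verticalArc p q).curve) (hzq : z.1 = q.1) : z = q := by
  rw [verticalArc, curve_oneBend] at hz
  rcases hz with hz | hz
  · exact absurd ((fst_eq_of_mem_segment hz).symm.trans hzq) hpq
  · exact eq_right_of_mem_segment (LinearMap.fst ℝ ℝ ℝ) hz hpq hzq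

theorem le_snd_of_mem_verticalArc {c : ℝ} (hp : c ≤ p.2) (hq : c + 1 ≤ q.2)
    (hz : z ∈ (verticalArc p q).curve) : c ≤ z.2 := by
  rw [verticalArc, curve_oneBend] at hz
  rcases hz with hz | hz
  · exact (convex_Ici c).segment_subset hp (le_sub_iff_add_le.2 hq)
      (Prod.segment_subset _ _ hz).2
  · exact (le_sub_iff_add_le.2 hq).trans (snd_mem_Icc_of_mem_ramp hz).1

theorem fst_eq_or_snd_lt_or_eq_of_mem_verticalArc (hz : z ∈ (verticalArc p q).curve) :
    z.1 = p.1 ∨ z.2 < q.2 ∨ z = q := by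
  rw [verticalArc, curve_oneBend] at hz
  refine hz.imp fst_eq_of_mem_segment fun hz => ?_
  exact (snd_mem_Icc_of_mem_ramp hz).2.lt_or_eq.imp_right
    (eq_right_of_mem_segment (LinearMap.snd ℝ ℝ ℝ) hz (sub_one_lt q.2).ne)

variable {m : ℕ} {P : Fin (m + 1) → ℝ × ℝ} {i j : Fin (m + 1)}

theorem verticalArc_curve_inter_subset_of_lt (hmono : StrictMono fun i => (P i).1)
    (hlow : ∀ i ≠ 0, (P 0).2 + 1 ≤ (P i).2) (hij : i < j) :
    (verticalArc (P i) (P (i + 1))).curve ∩ (verticalArc (P j) (P (j + 1))).curve ⊆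
      P '' ({i, i + 1} ∩ {j, j + 1}) := by
  rintro z ⟨hzi, hzj⟩
  have hi : i < i + 1 := Fin.lt_add_one_iff.2 (hij.trans_le j.le_last)
  obtain ⟨hiz, hzi'⟩ := fst_mem_Icc_of_mem_verticalArc (hmono hi).le hzi
  have meet_at_succ (hjz : (P j).1 ≤ z.1) : z ∈ P '' ({i, i + 1} ∩ {j, j + 1}) := by
    have hj : i + 1 = j :=
      (Fin.add_one_le_of_lt hij).antisymm (hmono.le_iff_le.1 (hjz.trans hzi'))
    have hz : z = P (i + 1) := eq_right_of_mem_verticalArc_of_fst_eq (hmono hi).ne hzi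
      (hzi'.antisymm (hj ▸ hjz))
    exact ⟨i + 1, ⟨Or.inr rfl, Or.inl hj⟩, hz.symm⟩
  rcases j.le_last.lt_or_eq with hj | rfl
  · exact meet_at_succ
      (fst_mem_Icc_of_mem_verticalArc (hmono (Fin.lt_add_one_iff.2 hj)).le hzj).1
  have hlowz : (P 0).2 ≤ z.2 := by
    refine le_snd_of_mem_verticalArc ?_ (hlow _ ((Fin.zero_le i).trans_lt hi).ne') hzi
    rcases eq_or_ne i 0 with rfl | hi0
    · exact le_rfl
    · linarith [hlow i hi0]
  rw [Fin.last_add_one] at hzj ⊢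
  rcases fst_eq_or_snd_lt_or_eq_of_mem_verticalArc hzj with hz | hz | rfl
  · have := meet_at_succ hz.ge
    rwa [Fin.last_add_one] at this
  · exact absurd hz hlowz.not_gt
  · have hi0 : 0 = i := (Fin.zero_le i).antisymm (hmono.le_iff_le.1 hiz)
    exact ⟨0, ⟨Or.inl hi0, Or.inr rfl⟩, rfl⟩

theorem verticalArc_curve_inter_subset (hmono : StrictMono fun i => (P i).1)
    (hlow : ∀ i ≠ 0, (P 0).2 + 1 ≤ (P i).2) (hij : i ≠ j) :
    (verticalArc (P i) (P (i + 1))).curve ∩ (verticalArc (P j) (P (j + 1))).curve ⊆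
      P '' ({i, i + 1} ∩ {j, j + 1}) := by
  rcases hij.lt_or_gt with hij | hij
  · exact verticalArc_curve_inter_subset_of_lt hmono hlow hij
  · rw [Set.inter_comm, Set.inter_comm {i, i + 1}]
    exact verticalArc_curve_inter_subset_of_lt hmono hlow hij

end Planarity

section Crossings

/-- A point of the lattice `(2ℤ)²`, on which all vertices are placed. -/
def IsEvenPoint (p : ℝ × ℝ) : Prop := ∃ a b : ℤ, p.1 = 2 * a ∧ p.2 = 2 * b

theorem IsEvenPoint.swap {p : ℝ × ℝ} : IsEvenPoint p → IsEvenPoint p.swap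
  | ⟨a, b, ha, hb⟩ => ⟨b, a, hb, ha⟩

variable {p q r t z : ℝ × ℝ} {s s' : (ℝ × ℝ) × (ℝ × ℝ)}

theorem exists_direction_of_mem_segs_verticalArc (hp : IsEvenPoint p) (hq : IsEvenPoint q)
    (hs : s ∈ (verticalArc p q).segs) :
    ∃ a b : ℤ, s.2.1 - s.1.1 = 2 * a ∧ s.2.2 - s.1.2 = 2 * b + 1 := by
  obtain ⟨a, b, ha, hb⟩ := hp
  obtain ⟨c, d, hc, hd⟩ := hq
  rw [verticalArc, segs_oneBend] at hs
  rcases hs with rfl | rfl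
  · exact ⟨0, d - b - 1, by simp, by push_cast; linarith⟩
  · exact ⟨c - a, 0, by push_cast; linarith, by simp⟩

theorem verticalArc_inter_horizontalArc_subsingleton
    (hp : IsEvenPoint p) (hq : IsEvenPoint q) (hr : IsEvenPoint r) (ht : IsEvenPoint t)
    (hs : s ∈ (verticalArc p q).segs) (hs' : s' ∈ (horizontalArc r t).segs) :
    (segment ℝ s.1 s.2 ∩ segment ℝ s'.1 s'.2).Subsingleton := by
  obtain ⟨a, b, ha, hb⟩ := exists_direction_of_mem_segs_verticalArc hp hq hs
  obtain ⟨c, d, hc, hd⟩ : ∃ c d : ℤ, s'.2.2 - s'.1.2 = 2 * c ∧ s'.2.1 - s'.1.1 = 2 * d + 1 :=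
    exists_direction_of_mem_segs_verticalArc hr.swap ht.swap (map_swap_mem_segs_verticalArc hs')
  apply segment_inter_segment_subsingleton
  rw [ha, hb, hc, hd]
  have hodd : Odd (2 * a * (2 * c) - (2 * b + 1) * (2 * d + 1)) :=
    ⟨2 * a * c - 2 * b * d - b - d - 1, by ring⟩
  intro hzero
  norm_cast at hzero
  rw [hzero] at hodd
  exact Int.not_odd_zero hodd

theorem fst_mem_Ioo_of_mem_ramp {y : ℝ} (hz : z ∈ openSegment ℝ (t.1 - 1, y) t) :
    z.1 ∈ Set.Ioo (t.1 - 1) t.1 :=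
  openSegment_eq_Ioo (𝕜 := ℝ) (sub_one_lt t.1) ▸ (Prod.openSegment_subset _ _ hz).1

theorem snd_mem_Ioo_of_mem_ramp {x : ℝ} (hz : z ∈ openSegment ℝ (x, q.2 - 1) q) :
    z.2 ∈ Set.Ioo (q.2 - 1) q.2 :=
  openSegment_eq_Ioo (𝕜 := ℝ) (sub_one_lt q.2) ▸ (Prod.openSegment_subset _ _ hz).2

theorem not_segCross_vertical_ramp {y y' : ℝ} (hp : IsEvenPoint p) (ht : IsEvenPoint t) :
    ¬ SegCross (p, (p.1, y)) ((t.1 - 1, y'), t) := by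
  rintro ⟨z, hzv, hzr⟩
  obtain ⟨hlo, hhi⟩ := fst_mem_Ioo_of_mem_ramp hzr
  rw [fst_eq_of_mem_segment (openSegment_subset_segment _ _ _ hzv)] at hlo hhi
  obtain ⟨a, -, ha, -⟩ := hp
  obtain ⟨c, -, hc, -⟩ := ht
  rw [ha, hc] at hlo hhi
  norm_cast at hlo hhi
  omega

theorem not_segCross_ramp_ramp_of_fst_eq
    (hp : IsEvenPoint p) (hq : IsEvenPoint q) (hr : IsEvenPoint r) (ht : IsEvenPoint t)
    (hstep : q.1 = p.1 + 2) (hinj : q.1 = t.1 → q = t) :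
    ¬ SegCross ((p.1, q.2 - 1), q) ((t.1 - 1, r.2), t) := by
  rintro ⟨z, hzq, hzt⟩
  obtain ⟨hlo, hhi⟩ : z.1 ∈ Set.Ioo p.1 q.1 :=
    openSegment_eq_Ioo (𝕜 := ℝ) (show p.1 < q.1 by linarith) ▸
      (Prod.openSegment_subset _ _ hzq).1
  obtain ⟨hlo', hhi'⟩ := fst_mem_Ioo_of_mem_ramp hzt
  have hqt : q.1 = t.1 := by
    obtain ⟨a, -, ha, -⟩ := hp
    obtain ⟨c, -, hc, -⟩ := ht
    have hlt : p.1 < t.1 := hlo.trans hhi'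
    have hgt : t.1 - 1 < p.1 + 2 := hlo'.trans (hhi.trans_eq hstep)
    rw [hstep, ha, hc]
    rw [ha, hc] at hlt hgt
    norm_cast at hlt hgt ⊢
    omega
  obtain rfl := hinj hqt
  have hz : z = q := verticalArc_inter_horizontalArc_subsingleton hp hq hr ht
    (segs_oneBend ▸ Or.inr rfl) (segs_oneBend ▸ Or.inr rfl)
    ⟨openSegment_subset_segment _ _ _ hzq, openSegment_subset_segment _ _ _ hzt⟩
    ⟨right_mem_segment ℝ _ _, right_mem_segment ℝ _ _⟩
  exact (hz ▸ hhi).false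

theorem not_segCross_ramp_ramp_of_snd_le (hr : q.2 ≤ r.2) (ht : q.2 ≤ t.2) :
    ¬ SegCross ((p.1, q.2 - 1), q) ((t.1 - 1, r.2), t) := by
  rintro ⟨z, hzq, hzt⟩
  have hz : q.2 ≤ z.2 := (convex_Ici q.2).openSegment_subset hr ht
    (Prod.openSegment_subset _ _ hzt).2
  exact hz.not_gt (snd_mem_Ioo_of_mem_ramp hzq).2

theorem segPerp_of_segCross_verticalArc_horizontalArc
    (hp : IsEvenPoint p) (hq : IsEvenPoint q) (hr : IsEvenPoint r) (ht : IsEvenPoint t)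
    (hstep : q.1 = p.1 + 2 ∨ q.2 ≤ r.2 ∧ q.2 ≤ t.2) (hinj : q.1 = t.1 → q = t)
    (hs : s ∈ (verticalArc p q).segs) (hs' : s' ∈ (horizontalArc r t).segs)
    (hcross : SegCross s s') : SegPerp s s' := by
  rw [verticalArc, segs_oneBend] at hs
  rw [horizontalArc, segs_oneBend] at hs'
  rcases hs with rfl | rfl <;> rcases hs' with rfl | rfl
  · simp [SegPerp]
  · exact absurd hcross (not_segCross_vertical_ramp hp ht)
  · exact absurd hcross.symm.map_swap (not_segCross_vertical_ramp hr.swap hq.swap)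
  · rcases hstep with hstep | ⟨hqr, hqt⟩
    · exact absurd hcross (not_segCross_ramp_ramp_of_fst_eq hp hq hr ht hstep hinj)
    · exact absurd hcross (not_segCross_ramp_ramp_of_snd_le hqr hqt)

end Crossings

/-- A numbering of the vertices by `Fin (m + 1)` in which every edge of `G` joins cyclically
consecutive vertices (addition in `Fin (m + 1)` wraps around), together with a choice `edgeIndex` of
the number of the vertex at which an edge starts (a junk value off the edge set). -/
structure CyclicNumbering {V : Type*} (G : SimpleGraph V) (m : ℕ) where
  vert : Fin (m + 1) ≃ V
  edgeIndex : Sym2 V → Fin (m + 1)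
  mk_edgeIndex : ∀ e ∈ G.edgeSet, s(vert (edgeIndex e), vert (edgeIndex e + 1)) = e

namespace IsSpanningCycle

variable {V : Type} {G : SimpleGraph V}

theorem exists_isHamiltonianCycle [Finite V] [DecidableEq V] (hG : IsSpanningCycle G) (v₀ : V) :
    ∃ p : G.Walk v₀ v₀, p.IsHamiltonianCycle ∧ ∀ e ∈ G.edgeSet, e ∈ p.edges := by
  have := Fintype.ofFinite V
  classical
  obtain ⟨hconn, hdeg⟩ := hG
  have hcycles : G.IsCycles := fun v _ => hdeg v
  have hnbr : (G.neighborSet v₀).Nonempty :=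
    Set.nonempty_of_ncard_ne_zero ((hdeg v₀).trans_ne two_ne_zero)
  obtain ⟨p, hp, hverts⟩ := hcycles.exists_cycle_toSubgraph_verts_eq_connectedComponentSupp
    (c := G.connectedComponentMk v₀) rfl hnbr
  have hmem (v : V) : v ∈ p.toSubgraph.verts := by
    rw [hverts]
    exact ConnectedComponent.sound (hconn.preconnected v v₀)
  refine ⟨p, ⟨hp, hp.isPath_tail.isHamiltonian_of_mem fun v => ?_⟩, fun e => ?_⟩
  · have hv : v ∈ p.support := p.mem_verts_toSubgraph.1 (hmem v)
    rw [p.support_tail_of_not_nil hp.not_nil]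
    rcases p.mem_support_iff.1 hv with rfl | hv
    · exact p.end_mem_tail_support hp.not_nil
    · exact hv
  · induction e with
    | h a b =>
      intro hab
      exact p.mem_edges_toSubgraph.1
        ((hp.adj_toSubgraph_iff_of_isCycles hcycles (hmem a) b).2 hab)

theorem exists_cyclicNumbering [Fintype V] {m : ℕ} (hG : IsSpanningCycle G)
    (hcard : Fintype.card V = m + 1) (v₀ : V) : ∃ A : CyclicNumbering G m, A.vert 0 = v₀ := by
  classical
  obtain ⟨p, hp, hedges⟩ := hG.exists_isHamiltonianCycle v₀
  have hlen : p.length = m + 1 := hp.length_eq.trans hcard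
  have hinj : Function.Injective fun i : Fin (m + 1) => p.getVert i := fun i j hij =>
    Fin.ext (hp.isCycle.getVert_injOn' (by grind) (by grind) hij)
  let vert : Fin (m + 1) ≃ V := Equiv.ofBijective (fun i => p.getVert i)
    ((Fintype.bijective_iff_injective_and_card _).2 ⟨hinj, by simp [hcard]⟩)
  have vert_add_one (i : Fin (m + 1)) : vert (i + 1) = p.getVert (i + 1) := by
    rcases i.le_last.lt_or_eq with hi | rfl
    · exact congrArg p.getVert (Fin.val_add_one_of_lt hi)
    · rw [Fin.last_add_one]
      exact p.getVert_zero.trans (p.getVert_length.symm.trans (congrArg p.getVert hlen))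
  have hindex : ∀ e ∈ G.edgeSet, ∃ i, s(vert i, vert (i + 1)) = e := by
    intro e he
    obtain ⟨k, hk, rfl⟩ := List.mem_iff_getElem.1 (hedges e he)
    rw [p.length_edges, hlen] at hk
    exact ⟨⟨k, hk⟩, by rw [vert_add_one, p.getElem_edges]; rfl⟩
  exact ⟨⟨vert, Function.invFun fun i => s(vert i, vert (i + 1)),
    fun e he => Function.invFun_eq (hindex e he)⟩, p.getVert_zero⟩

end IsSpanningCycle

namespace SimDrawing

variable {V : Type} {m : ℕ} {G : Fin m → SimpleGraph V} {D : SimDrawing G}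

theorem PlanarEach.segment_inter_subsingleton (hD : D.PlanarEach) {i : Fin m} {e e' : Sym2 V}
    (he : e ∈ (G i).edgeSet) (he' : e' ∈ (G i).edgeSet) (hne : e ≠ e')
    {s t : (ℝ × ℝ) × (ℝ × ℝ)} (hs : s ∈ (D.poly i e).segs) (ht : t ∈ (D.poly i e').segs) :
    (segment ℝ s.1 s.2 ∩ segment ℝ t.1 t.2).Subsingleton := by
  have hsub := (Set.inter_subset_inter (segment_subset_curve hs) (segment_subset_curve ht)).trans
    (hD i e he e' he' hne)
  intro x hx y hy
  obtain ⟨v, hve, hve', rfl⟩ := hsub hx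
  obtain ⟨w, hwe, hwe', rfl⟩ := hsub hy
  by_contra hvw
  have hvw : v ≠ w := fun h => hvw (congrArg D.pos h)
  exact hne (((Sym2.mem_and_mem_iff hvw).1 ⟨hve, hwe⟩).trans
    ((Sym2.mem_and_mem_iff hvw).1 ⟨hve', hwe'⟩).symm)

theorem PlanarEach.noOverlaps (hD : D.PlanarEach)
    (hlt : ∀ i j : Fin m, i < j → ∀ e ∈ (G i).edgeSet, ∀ e' ∈ (G j).edgeSet,
      ∀ s ∈ (D.poly i e).segs, ∀ t ∈ (D.poly j e').segs,
        (segment ℝ s.1 s.2 ∩ segment ℝ t.1 t.2).Subsingleton) :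
    D.NoOverlaps := by
  intro i e he j e' he' hne s hs t ht
  rcases lt_trichotomy i j with hij | rfl | hij
  · exact hlt i j hij e he e' he' s hs t ht
  · exact hD.segment_inter_subsingleton he he' (hne.resolve_left (· rfl)) hs ht
  · rw [Set.inter_comm]
    exact hlt j i hij e' he' e he t ht s hs

theorem rightAngleCrossings_of_lt
    (hlt : ∀ i j : Fin m, i < j → ∀ e ∈ (G i).edgeSet, ∀ e' ∈ (G j).edgeSet,
      ∀ s ∈ (D.poly i e).segs, ∀ t ∈ (D.poly j e').segs, SegCross s t → SegPerp s t) :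
    D.RightAngleCrossings := by
  intro i j hij e he e' he' s hs t ht hst
  rcases hij.lt_or_gt with hij | hij
  · exact hlt i j hij e he e' he' s hs t ht hst
  · exact (hlt j i hij e' he' e he t ht s hs hst.symm).symm

end SimDrawing

namespace CyclicNumbering

section Placement

variable {V : Type*} {G H : SimpleGraph V} {m : ℕ}

/-- The coordinate `2(i + 1)` of the vertex with number `i`. -/
def coord (A : CyclicNumbering G m) (v : V) : ℤ := 2 * ((A.vert.symm v : ℤ) + 1)

/-- The vertex at which a cyclic traversal enters the edge `e`. -/
def tail (A : CyclicNumbering G m) (e : Sym2 V) : V := A.vert (A.edgeIndex e)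

/-- The vertex at which a cyclic traversal leaves the edge `e`. -/
def head (A : CyclicNumbering G m) (e : Sym2 V) : V := A.vert (A.edgeIndex e + 1)

/-- The placement of the vertices, with abscissa given by `A` and ordinate given by `B`. -/
def placement (A : CyclicNumbering G m) (B : CyclicNumbering H m) (v : V) : ℝ × ℝ :=
  (A.coord v, B.coord v)

variable (A : CyclicNumbering G m) (B : CyclicNumbering H m) {e e' : Sym2 V}

theorem coord_vert (i : Fin (m + 1)) : A.coord (A.vert i) = 2 * ((i : ℤ) + 1) := by
  simp [coord]

theorem coord_injective : Function.Injective A.coord := by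
  intro v w hvw
  apply A.vert.symm.injective
  unfold coord at hvw
  omega

theorem coord_mem_Icc (v : V) : A.coord v ∈ Set.Icc 2 (2 * ((m : ℤ) + 1)) := by
  have := (A.vert.symm v).is_le
  constructor <;> unfold coord <;> omega

theorem coord_vert_zero_add_two_le {v : V} (hv : v ≠ A.vert 0) :
    A.coord (A.vert 0) + 2 ≤ A.coord v := by
  have : (A.vert.symm v : ℕ) ≠ 0 := by
    simpa [Fin.val_eq_zero_iff, Equiv.symm_apply_eq] using hv
  rw [coord_vert, coord, Fin.val_zero]
  omega

theorem coord_vert_zero_le (v : V) : A.coord (A.vert 0) ≤ A.coord v := by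
  rw [coord_vert]
  exact (A.coord_mem_Icc v).1

theorem coord_head_eq_or_head_eq (e : Sym2 V) :
    A.coord (A.head e) = A.coord (A.tail e) + 2 ∨ A.head e = A.vert 0 := by
  rcases (A.edgeIndex e).le_last.lt_or_eq with hlast | hlast
  · left
    rw [head, tail, coord_vert, coord_vert, Fin.val_add_one_of_lt hlast]
    push_cast
    ring
  · right
    rw [head, hlast, Fin.last_add_one]

theorem placement_injective : Function.Injective (A.placement B) := fun _ _ hvw =>
  A.coord_injective (Int.cast_injective (congrArg Prod.fst hvw))

theorem placement_swap (v : V) : (A.placement B v).swap = B.placement A v := rfl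

theorem isEvenPoint_placement (v : V) : IsEvenPoint (A.placement B v) :=
  ⟨A.vert.symm v + 1, B.vert.symm v + 1, by simp [placement, coord], by simp [placement, coord]⟩

theorem verticalArc_placement_inter_subset (hAB : A.vert 0 = B.vert 0) (he : e ∈ G.edgeSet)
    (he' : e' ∈ G.edgeSet) (hne : e ≠ e') :
    (verticalArc (A.placement B (A.tail e)) (A.placement B (A.head e))).curve ∩
      (verticalArc (A.placement B (A.tail e')) (A.placement B (A.head e'))).curve ⊆
      {p | ∃ v, v ∈ e ∧ v ∈ e' ∧ p = A.placement B v} := by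
  have hmono : StrictMono fun i => (A.placement B (A.vert i)).1 := by
    intro i j hij
    have : (i : ℕ) < j := hij
    simp only [placement, coord_vert]
    norm_cast
    omega
  have hlow (i : Fin (m + 1)) (hi : i ≠ 0) :
      (A.placement B (A.vert 0)).2 + 1 ≤ (A.placement B (A.vert i)).2 := by
    have := B.coord_vert_zero_add_two_le (hAB ▸ A.vert.injective.ne hi)
    simp only [placement, hAB]
    norm_cast
    omega
  have hindex : A.edgeIndex e ≠ A.edgeIndex e' := fun h =>
    hne (by rw [← A.mk_edgeIndex e he, ← A.mk_edgeIndex e' he', h])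
  have mem_of_mem {i : Fin (m + 1)} {e : Sym2 V} (he : e ∈ G.edgeSet)
      (hi : i ∈ ({A.edgeIndex e, A.edgeIndex e + 1} : Set _)) : A.vert i ∈ e := by
    rw [← A.mk_edgeIndex e he, Sym2.mem_iff]
    exact hi.imp (congrArg _) (congrArg _)
  intro z hz
  obtain ⟨i, ⟨hie, hie'⟩, rfl⟩ := verticalArc_curve_inter_subset hmono hlow hindex hz
  exact ⟨A.vert i, mem_of_mem he hie, mem_of_mem he' hie', rfl⟩

theorem horizontalArc_placement_inter_subset (hAB : A.vert 0 = B.vert 0) (he : e ∈ H.edgeSet)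
    (he' : e' ∈ H.edgeSet) (hne : e ≠ e') :
    (horizontalArc (A.placement B (B.tail e)) (A.placement B (B.head e))).curve ∩
      (horizontalArc (A.placement B (B.tail e')) (A.placement B (B.head e'))).curve ⊆
      {p | ∃ v, v ∈ e ∧ v ∈ e' ∧ p = A.placement B v} := by
  rintro z ⟨hz, hz'⟩
  have hswap := swap_mem_curve_verticalArc hz
  have hswap' := swap_mem_curve_verticalArc hz'
  rw [placement_swap, placement_swap] at hswap hswap'
  obtain ⟨v, hve, hve', hzv⟩ :=
    B.verticalArc_placement_inter_subset A hAB.symm he he' hne ⟨hswap, hswap'⟩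
  rw [← placement_swap] at hzv
  exact ⟨v, hve, hve', Prod.swap_injective hzv⟩

end Placement

section Drawing

variable {V : Type} {C₁ C₂ : SimpleGraph V} {m : ℕ}
  (A : CyclicNumbering C₁ m) (B : CyclicNumbering C₂ m)

/-- The simultaneous drawing of two cyclically numbered graphs in which each graph follows one of
the two coordinates. -/
def drawing : SimDrawing ![C₁, C₂] where
  pos := A.placement B
  pos_injective := A.placement_injective B
  poly := ![fun e => verticalArc (A.placement B (A.tail e)) (A.placement B (A.head e)),
    fun e => horizontalArc (A.placement B (B.tail e)) (A.placement B (B.head e))]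
  joins i a b hab := by
    fin_cases i
    · exact oneBend_joins (A.placement B) (A.mk_edgeIndex s(a, b) hab)
    · exact oneBend_joins (A.placement B) (B.mk_edgeIndex s(a, b) hab)

variable {A B}

theorem planarEach_drawing (hAB : A.vert 0 = B.vert 0) : (A.drawing B).PlanarEach := by
  intro i
  fin_cases i
  · exact fun e he e' he' hne => A.verticalArc_placement_inter_subset B hAB he he' hne
  · exact fun e he e' he' hne => A.horizontalArc_placement_inter_subset B hAB he he' hne

theorem noOverlaps_drawing (hAB : A.vert 0 = B.vert 0) : (A.drawing B).NoOverlaps := by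
  refine (planarEach_drawing hAB).noOverlaps fun i j hij => ?_
  obtain ⟨rfl, rfl⟩ : i = 0 ∧ j = 1 := by decide +revert
  intro e _ e' _ s hs t ht
  exact verticalArc_inter_horizontalArc_subsingleton (A.isEvenPoint_placement B _)
    (A.isEvenPoint_placement B _) (A.isEvenPoint_placement B _) (A.isEvenPoint_placement B _) hs ht

theorem rightAngleCrossings_drawing (hAB : A.vert 0 = B.vert 0) :
    (A.drawing B).RightAngleCrossings := by
  refine SimDrawing.rightAngleCrossings_of_lt fun i j hij => ?_
  obtain ⟨rfl, rfl⟩ : i = 0 ∧ j = 1 := by decide +revert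
  intro e _ e' _ s hs t ht
  refine segPerp_of_segCross_verticalArc_horizontalArc (A.isEvenPoint_placement B _)
    (A.isEvenPoint_placement B _) (A.isEvenPoint_placement B _) (A.isEvenPoint_placement B _)
    ?_ (fun hfst => congrArg _ (A.coord_injective (Int.cast_injective hfst))) hs ht
  have hlow (hhead : A.head e = A.vert 0) (v : V) :
      (A.placement B (A.head e)).2 ≤ (A.placement B v).2 := by
    rw [hhead, hAB]
    exact Int.cast_le.2 (B.coord_vert_zero_le v)
  refine (A.coord_head_eq_or_head_eq e).imp (fun hstep => ?_)
    fun hhead => ⟨hlow hhead _, hlow hhead _⟩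
  simp only [placement, hstep]
  push_cast
  rfl

theorem isRacSim_drawing (hAB : A.vert 0 = B.vert 0) : (A.drawing B).IsRacSim :=
  ⟨planarEach_drawing hAB, noOverlaps_drawing hAB, rightAngleCrossings_drawing hAB⟩

variable (A B)

theorem onGrid_drawing : (A.drawing B).OnGrid (2 * ((m : ℤ) + 1)) (2 * ((m : ℤ) + 1)) := by
  have hpos (v : V) : OnGridPt (2 * ((m : ℤ) + 1)) (2 * ((m : ℤ) + 1)) (A.placement B v) :=
    ⟨A.coord v, B.coord v, rfl, by grind [A.coord_mem_Icc v], (A.coord_mem_Icc v).2,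
      by grind [B.coord_mem_Icc v], (B.coord_mem_Icc v).2⟩
  refine ⟨hpos, Fin.forall_fin_two.2 ⟨fun e _ => ?_, fun e _ => ?_⟩⟩
  · have hx := A.coord_mem_Icc (A.tail e)
    have hy := B.coord_mem_Icc (A.head e)
    have hbend : OnGridPt (2 * ((m : ℤ) + 1)) (2 * ((m : ℤ) + 1))
        ((A.placement B (A.tail e)).1, (A.placement B (A.head e)).2 - 1) :=
      ⟨A.coord (A.tail e), B.coord (A.head e) - 1, by simp [placement], by grind⟩
    exact Fin.forall_fin_succ.2 ⟨hpos _, Fin.forall_fin_two.2 ⟨hbend, hpos _⟩⟩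
  · have hx := A.coord_mem_Icc (B.head e)
    have hy := B.coord_mem_Icc (B.tail e)
    have hbend : OnGridPt (2 * ((m : ℤ) + 1)) (2 * ((m : ℤ) + 1))
        ((A.placement B (B.head e)).1 - 1, (A.placement B (B.tail e)).2) :=
      ⟨A.coord (B.head e) - 1, B.coord (B.tail e), by simp [placement], by grind⟩
    exact Fin.forall_fin_succ.2 ⟨hpos _, Fin.forall_fin_two.2 ⟨hbend, hpos _⟩⟩

theorem bendsAtMost_drawing (i : Fin 2) : (A.drawing B).BendsAtMost i 1 := by
  fin_cases i <;> exact fun _ _ => le_rfl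

end Drawing

end CyclicNumbering

/-- Two spanning cycles on a common set of `n ≥ 3` vertices admit a RacSim drawing
on an integer grid of size `2n × 2n` with at most one bend per edge. -/
theorem racsim_cycle_cycle {V : Type} [Fintype V] (n : ℕ)
    (hcard : Fintype.card V = n) (hn : 3 ≤ n) (C₁ C₂ : SimpleGraph V)
    (h₁ : IsSpanningCycle C₁) (h₂ : IsSpanningCycle C₂) :
    ∃ D : SimDrawing ![C₁, C₂], D.IsRacSim ∧
      D.OnGrid (2 * (n : ℤ)) (2 * (n : ℤ)) ∧
      ∀ i : Fin 2, D.BendsAtMost i 1 := by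
  obtain ⟨v₀⟩ := h₁.1.nonempty
  obtain ⟨m, rfl⟩ : ∃ m, n = m + 1 := Nat.exists_eq_add_one.2 (by omega)
  obtain ⟨A, hA⟩ := h₁.exists_cyclicNumbering hcard v₀
  obtain ⟨B, hB⟩ := h₂.exists_cyclicNumbering hcard v₀
  exact ⟨A.drawing B, CyclicNumbering.isRacSim_drawing (hA.trans hB.symm),
    mod_cast A.onGrid_drawing B, A.bendsAtMost_drawing B⟩
end

section
/- For every four matchings M₁=(V,E₁), M₂=(V,E₂), M₃=(V,E₃), M₄=(V,E₄) on a common set V of n vertices, there exists a RacSim drawing of M₁, M₂, M₃ and M₄ on an integer grid of size 2n×2n in which every edge of every matching is drawn with at most one bend. -/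
open SimpleGraph

/-- A matching on a vertex set: a graph in which every vertex has degree at most 1. -/
def IsMatchingGraph {V : Type} (M : SimpleGraph V) : Prop :=
  ∀ v : V, vdeg M v ≤ 1

/-!
The four matchings are split into two pairs, one for each direction of the plane. The union of a
pair consists of paths and even cycles, so it can be oriented in such a way that every edge goes
from `p` to `π p` for a permutation `π`, and the edges of one matching start where those of the
other one end. In the direction of the pair the vertices are placed cycle by cycle, each cycle
of `π` along consecutive places, and the edge from `p` to `π p` is an axis-parallel arm that starts
at `p`, followed by a slanted segment that climbs by one unit to `π p` in the other direction. Arms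
of the two directions are perpendicular, so what has to be excluded are crossings with slants.
Nothing lies between consecutive vertices `p` and `π p`; the slant of the edge that closes a cycle
avoids the arms over the cycle if the cycle starts with its lowest vertex in the other direction.

The two directions thus depend on each other: the start of a cycle in one direction is determined by
the order in the other one. Fix an order of the cycles of each of the two permutations. The lowest
vertex of a cycle `C` lies in the first cycle `D` of the other permutation that meets `C`, so only
the start of `D` has to be known. This recursion goes down in the sum of the two positions unless
conversely `C` is the first cycle that meets `D`, and then both may start at any vertex of `C ∩ D`.
-/

namespace RacSim

open Equiv Equiv.Perm Function

/-! ### Alternating orientations of two matchings -/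

section Alternating

variable {W : Type*}

-- Conjugation by `F` inverts `ρ = G * F`, so `ρ ^ i v = F v` forces a fixed point half way:
-- of `F` if `i` is even, of `G` if `i` is odd.
lemma not_sameCycle_mul_apply {F G : Perm W} (hF : Involutive F) (hG : Involutive G)
    (hF' : ∀ v, F v ≠ v) (hG' : ∀ v, G v ≠ v) (v : W) : ¬ (G * F).SameCycle v (F v) := by
  rintro ⟨i, hi⟩
  have hinv : SemiconjBy F (G * F) (G * F)⁻¹ := by
    rw [SemiconjBy, mul_inv_rev, show F⁻¹ = F from Involutive.symm_eq_self_of_involutive F hF,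
      show G⁻¹ = G from Involutive.symm_eq_self_of_involutive G hG, mul_assoc]
  have hconj (j : ℤ) : F (((G * F) ^ j) v) = ((G * F) ^ (i - j)) v := by
    rw [← Perm.mul_apply, hinv.zpow_right j, Perm.mul_apply, ← hi, inv_zpow', ← Perm.mul_apply,
      ← zpow_add, neg_add_eq_sub]
  obtain ⟨j, rfl | rfl⟩ := Int.even_or_odd' i
  · refine hF' (((G * F) ^ j) v) ?_
    rw [hconj, two_mul, add_sub_cancel_right]
  · refine hG' (F (((G * F) ^ j) v)) ?_
    have hstep : G (F (((G * F) ^ j) v)) = ((G * F) ^ (1 + j)) v := by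
      rw [zpow_add, zpow_one, Perm.mul_apply, Perm.mul_apply]
    rw [hstep, hconj]
    congr 2
    ring

lemma exists_alternating_of_forall_ne {f : Bool → W → W} (hf : ∀ b, Involutive (f b))
    (hne : ∀ b v, f b v ≠ v) : ∃ c : W → Bool, ∀ b v, c (f b v) = !c v := by
  classical
  let ρ : Perm W := (hf true).toPerm * (hf false).toPerm
  let cycle : W → Quotient (SameCycle.setoid ρ) := Quotient.mk _
  let _ : LinearOrder (Quotient (SameCycle.setoid ρ)) := IsWellOrder.linearOrder WellOrderingRel
  have hcycle (v : W) : cycle (f false v) ≠ cycle v := fun h =>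
    not_sameCycle_mul_apply (F := (hf false).toPerm) (G := (hf true).toPerm) (hf false) (hf true)
      (hne false) (hne true) v (Quotient.exact h).symm
  have htrue (v : W) : cycle (f true v) = cycle (f false v) :=
    Quotient.sound <| SameCycle.symm ⟨1, congrArg (f true) (hf false v)⟩
  have hfalse (v : W) : cycle (f false (f true v)) = cycle v :=
    Quotient.sound ⟨1, (congrArg (f true) (hf false _)).trans (hf true v)⟩
  refine ⟨fun v => decide (cycle v < cycle (f false v)), fun b v => ?_⟩
  have hswap : decide (cycle (f false v) < cycle v) = !decide (cycle v < cycle (f false v)) := by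
    simp only [← decide_not, not_lt, (hcycle v).le_iff_lt]
  cases b
  · simpa only [hf false v] using hswap
  · simpa only [htrue, hfalse] using hswap

variable {V : Type*}

open Classical in
/-- The fixed-point-free lift of an involution `f` to two copies of its domain: it acts as `f` on
each copy, except that the two copies of a fixed point are exchanged. -/
noncomputable def doubleInvolution (f : V → V) (p : V × Bool) : V × Bool :=
  if f p.1 = p.1 then (p.1, !p.2) else (f p.1, p.2)

lemma doubleInvolution_of_ne {f : V → V} {v : V} (h : f v ≠ v) (b : Bool) :
    doubleInvolution f (v, b) = (f v, b) :=
  if_neg h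

lemma doubleInvolution_ne (f : V → V) (p : V × Bool) : doubleInvolution f p ≠ p := by
  unfold doubleInvolution
  split_ifs with h
  · exact fun h' => Bool.not_ne_self _ (congrArg Prod.snd h')
  · exact fun h' => h (congrArg Prod.fst h')

lemma involutive_doubleInvolution {f : V → V} (hf : Involutive f) :
    Involutive (doubleInvolution f) := by
  rintro ⟨v, b⟩
  by_cases h : f v = v
  · simp [doubleInvolution, h]
  · rw [doubleInvolution_of_ne h, doubleInvolution_of_ne (by rwa [hf v, ne_comm]), hf v]

lemma exists_alternating {f : Bool → V → V} (hf : ∀ b, Involutive (f b)) :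
    ∃ c : V → Bool, ∀ b v, f b v ≠ v → c (f b v) = !c v := by
  obtain ⟨c, hc⟩ := exists_alternating_of_forall_ne
    (fun b => involutive_doubleInvolution (hf b)) (fun b => doubleInvolution_ne (f b))
  refine ⟨fun v => c (v, false), fun b v h => ?_⟩
  rw [← hc b, doubleInvolution_of_ne h]

lemma exists_perm_extending_alternating [Finite V] {f : Bool → V → V} (hf : ∀ b, Involutive (f b))
    {c : V → Bool} (hc : ∀ b v, f b v ≠ v → c (f b v) = !c v) :
    ∃ π : Perm V, ∀ v, f (c v) v ≠ v → π v = f (c v) v := by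
  classical
  cases nonempty_fintype V
  have hinj : Set.InjOn (fun v => f (c v) v) {v | f (c v) v ≠ v} := by
    intro v hv w hw (heq : f (c v) v = f (c w) w)
    have hcolor : c v = c w := by
      rw [← Bool.not_inj_iff, ← hc _ v hv, heq, hc _ w hw]
    rw [hcolor] at heq
    exact (hf _).injective heq
  obtain ⟨e, he⟩ := Set.MapsTo.exists_equiv_extend_of_card_eq (t := Finset.univ) rfl
    (fun _ _ => Finset.mem_univ _) hinj
  exact ⟨e.trans (Equiv.subtypeUnivEquiv Finset.mem_univ), he⟩

end Alternating

section Matching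

variable {V : Type} [Finite V]

lemma eq_of_adj_of_adj {M : SimpleGraph V} (hM : IsMatchingGraph M) {u v w : V}
    (hv : M.Adj u v) (hw : M.Adj u w) : v = w :=
  (Set.ncard_le_one (Set.toFinite _)).1 (hM u) v hv w hw

lemma exists_involutive_partner {M : SimpleGraph V} (hM : IsMatchingGraph M) :
    ∃ f : V → V, Involutive f ∧ ∀ u v, M.Adj u v → f u = v := by
  have hpartner (u : V) : ∃ v, M.Adj u v ∨ v = u ∧ ∀ w, ¬ M.Adj u w := by
    by_cases h : ∃ v, M.Adj u v
    · exact h.imp fun _ => Or.inl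
    · exact ⟨u, Or.inr ⟨rfl, not_exists.1 h⟩⟩
  choose f hf using hpartner
  have hadj (u v : V) (huv : M.Adj u v) : f u = v := by
    rcases hf u with h | h
    · exact eq_of_adj_of_adj hM h huv
    · exact absurd huv (h.2 v)
  refine ⟨f, fun u => ?_, hadj⟩
  rcases hf u with h | h
  · exact hadj _ _ h.symm
  · rw [h.1, h.1]

lemma exists_alternating_orientation {M : Bool → SimpleGraph V} (hM : ∀ b, IsMatchingGraph (M b)) :
    ∃ (π : Perm V) (c : V → Bool), ∀ b u v, (M b).Adj u v →
      c v = !c u ∧ (c u = b → π u = v) := by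
  choose f hf hadj using fun b => exists_involutive_partner (hM b)
  obtain ⟨c, hc⟩ := exists_alternating hf
  obtain ⟨π, hπ⟩ := exists_perm_extending_alternating hf hc
  refine ⟨π, c, fun b u v huv => ?_⟩
  obtain rfl := hadj b u v huv
  refine ⟨hc b u huv.ne', ?_⟩
  rintro rfl
  exact hπ u huv.ne'

end Matching

/-! ### Anchors of two partitions -/

section Anchor

variable {V : Type*} (K : Bool → V → ℕ) (d : Bool → V → V → ℕ)

/-- For the two partitions of `V` into the fibres of `K false` and `K true`: an element of the
`β`-class of `v` whose class in the other partition has the smallest label. -/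
noncomputable def lowest (β : Bool) (v : V) : V :=
  argminOn (K (!β)) {w | K β w = K β v} ⟨v, rfl⟩

lemma label_lowest (β : Bool) (v : V) : K β (lowest K β v) = K β v :=
  argminOn_mem (K (!β)) {w | K β w = K β v} ⟨v, rfl⟩

lemma label_not_lowest_le {β : Bool} {v w : V} (h : K β w = K β v) :
    K (!β) (lowest K β v) ≤ K (!β) w :=
  argminOn_le (K (!β)) {w | K β w = K β v} h

lemma lowest_congr {β : Bool} {v w : V} (h : K β w = K β v) : lowest K β w = lowest K β v := by
  simp only [lowest, h]

/-- The cell of `u` in the common refinement of the two partitions. -/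
def cell (u : V) : Set V := {w | ∀ β, K β w = K β u}

lemma mem_cell_self (u : V) : u ∈ cell K u := fun _ => rfl

lemma mem_cell_of_eq {β : Bool} {u w : V} (h : K β w = K β u) (h' : K (!β) w = K (!β) u) :
    w ∈ cell K u :=
  (Bool.forall_bool' β).2 ⟨h, h'⟩

lemma cell_congr {u w : V} (h : w ∈ cell K u) : cell K w = cell K u := by
  simp only [cell, h _]

open Classical in
/-- The starting element of the `β`-class of `v`, an element of the cell of `u = lowest K β v`.
It is the one nearest, for `d (!β)`, to the starting element of the other class of `u`; if
conversely the lowest element of that other class lies in the `β`-class of `v`, then the two classes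
share an arbitrary starting element. -/
noncomputable def anchor (β : Bool) (v : V) : V :=
  if _h : K β (lowest K (!β) (lowest K β v)) = K β v then
    Set.Nonempty.some ⟨_, mem_cell_self K (lowest K β v)⟩
  else
    argminOn (d (!β) (anchor (!β) (lowest K β v))) (cell K (lowest K β v)) ⟨_, mem_cell_self K _⟩
termination_by K β v + K (!β) (lowest K β v)
decreasing_by
  have hle := label_not_lowest_le K (β := !β) (v := lowest K β v) rfl
  rw [Bool.not_not, label_lowest K] at hle
  rw [Bool.not_not]
  lia

lemma anchor_mem_cell (β : Bool) (v : V) : anchor K d β v ∈ cell K (lowest K β v) := by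
  rw [anchor]
  split_ifs
  · exact Set.Nonempty.some_mem _
  · exact argminOn_mem _ _ _

lemma label_anchor (β : Bool) (v : V) : K β (anchor K d β v) = K β v :=
  (anchor_mem_cell K d β v β).trans (label_lowest K β v)

lemma anchor_congr {β : Bool} {v w : V} (h : K β w = K β v) :
    anchor K d β w = anchor K d β v := by
  rw [anchor, anchor.eq_1 K d β v]
  simp only [lowest_congr K h, h]

lemma anchor_not_lowest_eq_anchor {β : Bool} {v : V}
    (h : K β (lowest K (!β) (lowest K β v)) = K β v) :
    anchor K d (!β) (lowest K β v) = anchor K d β v := by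
  have hback : lowest K β (lowest K (!β) (lowest K β v)) = lowest K β v := lowest_congr K h
  have hcell : cell K (lowest K (!β) (lowest K β v)) = cell K (lowest K β v) :=
    cell_congr K (mem_cell_of_eq K (h.trans (label_lowest K β v).symm) (label_lowest K _ _))
  rw [anchor, anchor.eq_1 K d β v, dif_pos h, dif_pos (by rw [Bool.not_not, hback])]
  simp only [hcell]

/-- The order on `V` in direction `β`: first by the class, then by the distance from the anchor of
the class. -/
noncomputable def anchorKey (β : Bool) (v : V) : ℕ ×ₗ ℕ :=
  toLex (K β v, d β (anchor K d β v) v)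

lemma anchorKey_le_anchorKey {β : Bool} {v w : V} :
    anchorKey K d β v ≤ anchorKey K d β w ↔ K β v < K β w ∨
      K β v = K β w ∧ d β (anchor K d β v) v ≤ d β (anchor K d β w) w :=
  Prod.Lex.toLex_le_toLex

lemma anchorKey_lt_anchorKey {β : Bool} {v w : V} :
    anchorKey K d β v < anchorKey K d β w ↔ K β v < K β w ∨
      K β v = K β w ∧ d β (anchor K d β v) v < d β (anchor K d β w) w :=
  Prod.Lex.toLex_lt_toLex

lemma anchor_dist_le (hd : ∀ β a, d β a a = 0) {β : Bool} {v w : V}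
    (hw : w ∈ cell K (lowest K β v)) :
    d (!β) (anchor K d (!β) (lowest K β v)) (anchor K d β v) ≤
      d (!β) (anchor K d (!β) (lowest K β v)) w := by
  by_cases h : K β (lowest K (!β) (lowest K β v)) = K β v
  · rw [anchor_not_lowest_eq_anchor K d h, hd]
    exact Nat.zero_le _
  · rw [anchor.eq_1 K d β v, dif_neg h]
    exact argminOn_le _ _ hw

lemma anchorKey_not_anchor_le (hd : ∀ β a, d β a a = 0) {β : Bool} {v w : V}
    (h : K β w = K β v) : anchorKey K d (!β) (anchor K d β v) ≤ anchorKey K d (!β) w := by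
  have hlabel : K (!β) (anchor K d β v) = K (!β) (lowest K β v) := anchor_mem_cell K d β v _
  rw [anchorKey_le_anchorKey, hlabel, anchor_congr K d hlabel]
  refine (label_not_lowest_le K h).lt_or_eq.imp_right fun heq => ⟨heq, ?_⟩
  rw [anchor_congr K d heq.symm]
  exact anchor_dist_le K d hd (mem_cell_of_eq K (h.trans (label_lowest K β v).symm) heq.symm)

end Anchor

/-! ### Cyclic layouts -/

section CycleDist

variable {V : Type*} {σ : Perm V}

/-- The number of steps that `σ` takes from `a` to `v`; the junk value is `0` if no power of `σ`
maps `a` to `v`. -/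
noncomputable def cycleDist (σ : Perm V) (a v : V) : ℕ := sInf {k : ℕ | (σ ^ k) a = v}

lemma cycleDist_le {a v : V} {k : ℕ} (h : (σ ^ k) a = v) : cycleDist σ a v ≤ k :=
  Nat.sInf_le h

lemma cycleDist_self (σ : Perm V) (a : V) : cycleDist σ a a = 0 :=
  Nat.le_zero.1 (cycleDist_le rfl)

lemma pow_cycleDist_apply [Finite V] {a v : V} (h : σ.SameCycle a v) :
    (σ ^ cycleDist σ a v) a = v :=
  Nat.sInf_mem (s := {k : ℕ | (σ ^ k) a = v}) h.exists_nat_pow_eq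

lemma cycleDist_apply [Finite V] {a p : V} (h : σ.SameCycle a p) (hne : σ p ≠ a) :
    cycleDist σ a (σ p) = cycleDist σ a p + 1 := by
  have hle : cycleDist σ a (σ p) ≤ cycleDist σ a p + 1 :=
    cycleDist_le (by rw [pow_succ', Perm.mul_apply, pow_cycleDist_apply h])
  have hpow := pow_cycleDist_apply h.apply_right
  rcases hk : cycleDist σ a (σ p) with _ | k
  · exact absurd (by rw [← hpow, hk, pow_zero, Perm.one_apply]) hne
  · rw [hk, pow_succ', Perm.mul_apply] at hpow
    have hge := cycleDist_le (σ.injective hpow)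
    lia

lemma exists_cycle_labelling [Finite V] (σ : Perm V) :
    ∃ k : V → ℕ, ∀ v w, k v = k w ↔ σ.SameCycle v w := by
  obtain ⟨n, ⟨e⟩⟩ := Finite.exists_equiv_fin (Quotient (SameCycle.setoid σ))
  refine ⟨fun v => e (Quotient.mk _ v), fun v w => ?_⟩
  rw [Fin.val_inj, e.apply_eq_iff_eq]
  exact Quotient.eq

end CycleDist

section Layout

variable {V : Type*} {α : Type*} [LinearOrder α]

/-- The step from `p` to `π β p` leads to the next vertex in direction `β`. -/
structure Ascends (π : Bool → Perm V) (x : Bool → V → α) (β : Bool) (p : V) : Prop where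
  lt : x β p < x β (π β p)
  le_of_lt : ∀ w, x β w < x β (π β p) → x β w ≤ x β p

/-- The step from `p` to `π β p` leads back to the start of an interval of direction `β` that is
occupied by a single cycle, and this start is the smallest vertex of the cycle in the other
direction. -/
structure Closes (π : Bool → Perm V) (x : Bool → V → α) (β : Bool) (p : V) : Prop where
  le : x β (π β p) ≤ x β p
  sameCycle : ∀ w, x β (π β p) ≤ x β w → x β w ≤ x β p → (π β).SameCycle p w
  isLowest : ∀ w, (π β).SameCycle p w → x (!β) (π β p) ≤ x (!β) w

/-- Coordinates `x false` and `x true` such that every cycle of `π β` occupies consecutive places in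
direction `β`, in its cyclic order and starting with its smallest vertex in the other direction. -/
structure IsCyclicLayout (π : Bool → Perm V) (x : Bool → V → α) : Prop where
  injective : ∀ β, Injective (x β)
  ascends_or_closes : ∀ β p, Ascends π x β p ∨ Closes π x β p

lemma IsCyclicLayout.congr {α' : Type*} [LinearOrder α'] {π : Bool → Perm V}
    {x : Bool → V → α} (hx : IsCyclicLayout π x) {y : Bool → V → α'}
    (hxy : ∀ β v w, y β v ≤ y β w ↔ x β v ≤ x β w) : IsCyclicLayout π y where
  injective β v w h :=
    hx.injective β (le_antisymm ((hxy _ _ _).1 h.le) ((hxy _ _ _).1 h.ge))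
  ascends_or_closes β p := by
    have hxy' (β : Bool) (v w : V) : y β v < y β w ↔ x β v < x β w :=
      lt_iff_lt_of_le_iff_le (hxy β w v)
    refine (hx.ascends_or_closes β p).imp (fun h => ⟨?_, ?_⟩) (fun h => ⟨?_, ?_, ?_⟩)
    · exact (hxy' _ _ _).2 h.lt
    · simpa only [hxy, hxy'] using h.le_of_lt
    · exact (hxy _ _ _).2 h.le
    · simpa only [hxy] using h.sameCycle
    · simpa only [hxy] using h.isLowest

lemma exists_equiv_fin_le_iff_le [Fintype V] {x : V → α} (hx : Injective x) :
    ∃ e : V ≃ Fin (Fintype.card V), ∀ v w, e v ≤ e w ↔ x v ≤ x w := by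
  let _ : LinearOrder V := LinearOrder.lift' x hx
  let e := (Fintype.orderIsoFinOfCardEq V rfl).symm
  exact ⟨e.toEquiv, fun _ _ => e.le_iff_le⟩

end Layout

section AnchorLayout

variable {V : Type*} [Finite V] {π : Bool → Perm V} {K : Bool → V → ℕ}

lemma injective_anchorKey (hK : ∀ β v w, K β v = K β w ↔ (π β).SameCycle v w) (β : Bool) :
    Injective (anchorKey K (fun β => cycleDist (π β)) β) := by
  intro v w h
  obtain ⟨hlabel, hdist⟩ := Prod.ext_iff.1 (congrArg ofLex h)
  have hpow (u : V) := pow_cycleDist_apply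
    ((hK β _ u).1 (label_anchor K (fun β => cycleDist (π β)) β u))
  rw [← hpow v, ← hpow w]
  exact congrArg₂ (fun k a => ((π β) ^ k) a) hdist (anchor_congr K _ hlabel)

lemma ascends_or_closes_anchorKey (hK : ∀ β v w, K β v = K β w ↔ (π β).SameCycle v w)
    (β : Bool) (p : V) : Ascends π (anchorKey K (fun β => cycleDist (π β))) β p ∨
      Closes π (anchorKey K (fun β => cycleDist (π β))) β p := by
  set d := fun β => cycleDist (π β)
  have hlabel : K β (π β p) = K β p := (hK _ _ _).2 (SameCycle.refl _ _).apply_left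
  have hanchor : anchor K d β (π β p) = anchor K d β p := anchor_congr K d hlabel
  by_cases hp : π β p = anchor K d β p
  · have hzero : d β (anchor K d β p) (π β p) = 0 := by
      rw [hp]
      exact cycleDist_self (π β) _
    refine Or.inr ⟨?_, fun w hge hle => ?_, fun w hw => ?_⟩
    · rw [anchorKey_le_anchorKey, hlabel, hanchor, hzero]
      exact Or.inr ⟨rfl, Nat.zero_le _⟩
    · rw [anchorKey_le_anchorKey, hlabel] at hge
      rw [anchorKey_le_anchorKey] at hle
      exact (hK β p w).1 (by lia)
    · rw [hp]
      exact anchorKey_not_anchor_le K d (fun β => cycleDist_self (π β)) ((hK β w p).2 hw.symm)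
  · have hsucc : d β (anchor K d β p) (π β p) = d β (anchor K d β p) p + 1 :=
      cycleDist_apply ((hK _ _ _).1 (label_anchor K d β p)) hp
    refine Or.inl ⟨?_, fun w hw => ?_⟩
    · rw [anchorKey_lt_anchorKey, hlabel, hanchor, hsucc]
      exact Or.inr ⟨rfl, Nat.lt_succ_self _⟩
    · rw [anchorKey_lt_anchorKey, hlabel, hanchor, hsucc] at hw
      rw [anchorKey_le_anchorKey]
      lia

lemma exists_isCyclicLayout_fin {V : Type*} [Fintype V] (π : Bool → Perm V) :
    ∃ x : Bool → V → Fin (Fintype.card V), IsCyclicLayout π x := by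
  choose K hK using fun β => exists_cycle_labelling (π β)
  choose e he using fun β => exists_equiv_fin_le_iff_le (injective_anchorKey hK β)
  have hkey : IsCyclicLayout π (anchorKey K fun β => cycleDist (π β)) :=
    ⟨injective_anchorKey hK, ascends_or_closes_anchorKey hK⟩
  exact ⟨fun β => e β, hkey.congr he⟩

end AnchorLayout

/-! ### Segments in coordinates -/

section Segments

variable {E : Type*} [AddCommGroup E] [Module ℝ E] {a b r r' : E}

lemma apply_mem_uIcc_of_mem_segment (f : E →ₗ[ℝ] ℝ) (h : r ∈ segment ℝ a b) :
    f r ∈ Set.uIcc (f a) (f b) := by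
  rw [← segment_eq_uIcc]
  exact image_segment ℝ f.toAffineMap a b ▸ Set.mem_image_of_mem f h

lemma apply_mem_Ioo_of_mem_openSegment (f : E →ₗ[ℝ] ℝ) (hab : f a < f b)
    (h : r ∈ openSegment ℝ a b) : f r ∈ Set.Ioo (f a) (f b) := by
  rw [← openSegment_eq_Ioo hab]
  exact image_openSegment ℝ f.toAffineMap a b ▸ Set.mem_image_of_mem f h

lemma midpoint_mem_openSegment_of_ne (h : r ∈ segment ℝ a b) (h' : r' ∈ segment ℝ a b)
    (hne : r ≠ r') : midpoint ℝ r r' ∈ openSegment ℝ a b := by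
  rw [segment_eq_image_lineMap] at h h'
  obtain ⟨t, ⟨ht0, ht1⟩, rfl⟩ := h
  obtain ⟨t', ⟨ht0', ht1'⟩, rfl⟩ := h'
  have htt' : t ≠ t' := fun h => hne (by rw [h])
  rw [openSegment_eq_image_lineMap, ← AffineMap.map_midpoint]
  refine Set.mem_image_of_mem _ ?_
  rw [midpoint_eq_smul_add, smul_eq_mul, invOf_eq_inv]
  rcases htt'.lt_or_gt with h | h <;> constructor <;> linarith

lemma exists_smul_eq_sub_of_mem_segment (h : r ∈ segment ℝ a b) (h' : r' ∈ segment ℝ a b) :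
    ∃ t : ℝ, t • (b - a) = r' - r := by
  rw [segment_eq_image'] at h h'
  obtain ⟨t, -, rfl⟩ := h
  obtain ⟨t', -, rfl⟩ := h'
  exact ⟨t' - t, by rw [sub_smul, add_sub_add_left_eq_sub]⟩

end Segments

lemma segCross_symm {s t : (ℝ × ℝ) × (ℝ × ℝ)} (h : SegCross s t) : SegCross t s := by
  rwa [SegCross, Set.inter_comm]

-- Two common points make the segments cross, at their midpoint; then the difference of the two
-- points is a multiple of two orthogonal vectors, hence orthogonal to itself.
lemma subsingleton_inter_of_segPerp_of_segCross {s t : (ℝ × ℝ) × (ℝ × ℝ)}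
    (h : SegCross s t → SegPerp s t) :
    (segment ℝ s.1 s.2 ∩ segment ℝ t.1 t.2).Subsingleton := by
  rintro r ⟨hs, ht⟩ r' ⟨hs', ht'⟩
  by_contra hne
  have hperp : (s.2.1 - s.1.1) * (t.2.1 - t.1.1) + (s.2.2 - s.1.2) * (t.2.2 - t.1.2) = 0 :=
    h ⟨_, midpoint_mem_openSegment_of_ne hs hs' hne, midpoint_mem_openSegment_of_ne ht ht' hne⟩
  obtain ⟨k, hk⟩ := exists_smul_eq_sub_of_mem_segment hs hs'
  obtain ⟨l, hl⟩ := exists_smul_eq_sub_of_mem_segment ht ht'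
  obtain ⟨hk₁, hk₂⟩ := Prod.ext_iff.1 hk
  obtain ⟨hl₁, hl₂⟩ := Prod.ext_iff.1 hl
  simp only [Prod.smul_fst, Prod.smul_snd, Prod.fst_sub, Prod.snd_sub, smul_eq_mul]
    at hk₁ hk₂ hl₁ hl₂
  have hnorm : (r'.1 - r.1) * (r'.1 - r.1) + (r'.2 - r.2) * (r'.2 - r.2) = 0 := by
    calc _ = k * (s.2.1 - s.1.1) * (l * (t.2.1 - t.1.1)) +
          k * (s.2.2 - s.1.2) * (l * (t.2.2 - t.1.2)) := by rw [hk₁, hk₂, hl₁, hl₂]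
      _ = k * l * ((s.2.1 - s.1.1) * (t.2.1 - t.1.1) + (s.2.2 - s.1.2) * (t.2.2 - t.1.2)) := by
          ring
      _ = 0 := by rw [hperp, mul_zero]
  obtain ⟨h₁, h₂⟩ := mul_self_add_mul_self_eq_zero.1 hnorm
  exact hne (Prod.ext (sub_eq_zero.1 h₁) (sub_eq_zero.1 h₂)).symm

/-- The coordinate in direction `β`: the first one for `false`, the second one for `true`. -/
def coord (β : Bool) : ℝ × ℝ →ₗ[ℝ] ℝ :=
  bif β then LinearMap.snd ℝ ℝ ℝ else LinearMap.fst ℝ ℝ ℝ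

lemma onGridPt_of_coord {N : ℤ} {r : ℝ × ℝ}
    (h : ∀ β, ∃ k : ℤ, coord β r = k ∧ 1 ≤ k ∧ k ≤ N) : OnGridPt N N r := by
  obtain ⟨k, hk, hk1, hkN⟩ := h false
  obtain ⟨l, hl, hl1, hlN⟩ := h true
  exact ⟨k, l, Prod.ext hk hl, hk1, hkN, hl1, hlN⟩

/-! ### Arcs of a cyclic layout -/

section Arc

variable {V : Type*}

/-- A cyclic layout with enough room between the vertices for a bend at distance `1` from them. -/
structure IsSpacedLayout (π : Bool → Perm V) (x : Bool → V → ℝ) : Prop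
    extends IsCyclicLayout π x where
  gap : ∀ β v w, x β v < x β w → x β v + 1 < x β w

/-- The point with coordinates `x`. -/
def vertexPt (x : Bool → V → ℝ) (v : V) : ℝ × ℝ := (x false v, x true v)

variable (π : Bool → Perm V) (x : Bool → V → ℝ)

/-- The bend of the arc from `p` to `π β p`: aligned with `p` in direction `β`, and at distance `1`
before `π β p` in the other direction. -/
def bendPt (β : Bool) (p : V) : ℝ × ℝ :=
  bif β then (x false (π true p) - 1, x true p) else (x false p, x true (π false p) - 1)

/-- The axis-parallel first segment of the arc from `p` to `π β p`. -/
def arm (β : Bool) (p : V) : (ℝ × ℝ) × (ℝ × ℝ) := (vertexPt x p, bendPt π x β p)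

/-- The slanted second segment of the arc from `p` to `π β p`. -/
def slant (β : Bool) (p : V) : (ℝ × ℝ) × (ℝ × ℝ) := (bendPt π x β p, vertexPt x (π β p))

/-- The one-bend polyline from `p` to `π β p`. -/
def arc (β : Bool) (p : V) : Polyline :=
  ⟨2, ![vertexPt x p, bendPt π x β p, vertexPt x (π β p)]⟩

lemma segs_arc (β : Bool) (p : V) : (arc π x β p).segs = {arm π x β p, slant π x β p} := by
  ext s
  exact Fin.exists_fin_two

lemma curve_arc (β : Bool) (p : V) : (arc π x β p).curve =
    segment ℝ (arm π x β p).1 (arm π x β p).2 ∪ segment ℝ (slant π x β p).1 (slant π x β p).2 := by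
  ext r
  exact Set.mem_iUnion.trans Fin.exists_fin_two

lemma coord_vertexPt (β : Bool) (v : V) : coord β (vertexPt x v) = x β v := by
  cases β <;> rfl

lemma coord_bendPt (β : Bool) (p : V) : coord β (bendPt π x β p) = x β p := by
  cases β <;> rfl

lemma coord_not_bendPt (β : Bool) (p : V) :
    coord (!β) (bendPt π x β p) = x (!β) (π β p) - 1 := by
  cases β <;> rfl

variable {π x} {β : Bool} {p p' : V} {r : ℝ × ℝ}

lemma coord_of_mem_arm (h : r ∈ segment ℝ (arm π x β p).1 (arm π x β p).2) :
    coord β r = x β p := by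
  simpa only [arm, coord_vertexPt, coord_bendPt, Set.uIcc_self, Set.mem_singleton_iff]
    using apply_mem_uIcc_of_mem_segment (coord β) h

lemma coord_not_of_mem_arm (h : r ∈ segment ℝ (arm π x β p).1 (arm π x β p).2) :
    coord (!β) r ∈ Set.uIcc (x (!β) p) (x (!β) (π β p) - 1) := by
  simpa only [arm, coord_vertexPt, coord_not_bendPt]
    using apply_mem_uIcc_of_mem_segment (coord (!β)) h

lemma coord_of_mem_slant (h : r ∈ segment ℝ (slant π x β p).1 (slant π x β p).2) :
    coord β r ∈ Set.uIcc (x β p) (x β (π β p)) := by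
  simpa only [slant, coord_vertexPt, coord_bendPt]
    using apply_mem_uIcc_of_mem_segment (coord β) h

lemma coord_not_of_mem_slant (h : r ∈ segment ℝ (slant π x β p).1 (slant π x β p).2) :
    coord (!β) r ∈ Set.Icc (x (!β) (π β p) - 1) (x (!β) (π β p)) := by
  rw [← Set.uIcc_of_le (sub_one_lt _).le]
  simpa only [slant, coord_vertexPt, coord_not_bendPt]
    using apply_mem_uIcc_of_mem_segment (coord (!β)) h

lemma coord_not_of_mem_openSegment_slant
    (h : r ∈ openSegment ℝ (slant π x β p).1 (slant π x β p).2) :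
    coord (!β) r ∈ Set.Ioo (x (!β) (π β p) - 1) (x (!β) (π β p)) := by
  have hlt : coord (!β) (slant π x β p).1 < coord (!β) (slant π x β p).2 := by
    simpa only [slant, coord_vertexPt, coord_not_bendPt] using sub_one_lt _
  simpa only [slant, coord_vertexPt, coord_not_bendPt]
    using apply_mem_Ioo_of_mem_openSegment (coord (!β)) hlt h

lemma coord_of_mem_openSegment_slant_of_lt (hlt : x β p < x β (π β p))
    (h : r ∈ openSegment ℝ (slant π x β p).1 (slant π x β p).2) :
    coord β r ∈ Set.Ioo (x β p) (x β (π β p)) := by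
  have hlt' : coord β (slant π x β p).1 < coord β (slant π x β p).2 := by
    simpa only [slant, coord_vertexPt, coord_bendPt] using hlt
  simpa only [slant, coord_vertexPt, coord_bendPt]
    using apply_mem_Ioo_of_mem_openSegment (coord β) hlt' h

lemma coord_of_mem_openSegment_slant_of_gt (hgt : x β (π β p) < x β p)
    (h : r ∈ openSegment ℝ (slant π x β p).1 (slant π x β p).2) :
    coord β r ∈ Set.Ioo (x β (π β p)) (x β p) := by
  have hgt' : coord β (slant π x β p).2 < coord β (slant π x β p).1 := by
    simpa only [slant, coord_vertexPt, coord_bendPt] using hgt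
  rw [openSegment_symm] at h
  simpa only [slant, coord_vertexPt, coord_bendPt]
    using apply_mem_Ioo_of_mem_openSegment (coord β) hgt' h

lemma slope_of_mem_slant (h : r ∈ segment ℝ (slant π x β p).1 (slant π x β p).2) :
    x β (π β p) - coord β r = (x β (π β p) - x β p) * (x (!β) (π β p) - coord (!β) r) := by
  obtain ⟨s, t, -, -, hst, rfl⟩ := h
  obtain rfl : s = 1 - t := eq_sub_of_add_eq hst
  simp only [slant, map_add, map_smul, coord_vertexPt, coord_bendPt, coord_not_bendPt, smul_eq_mul]
  ring

end Arc

/-! ### Crossings of arcs -/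

section Crossing

variable {V : Type*} {π : Bool → Perm V} {x : Bool → V → ℝ} {β : Bool} {p p' : V} {r : ℝ × ℝ}

lemma segPerp_arm_arm_not : SegPerp (arm π x β p) (arm π x (!β) p') := by
  cases β <;> simp [SegPerp, arm, vertexPt, bendPt]

lemma Ascends.eq_of_mem_openSegment_slant (hp : Ascends π x β p)
    (hx : IsSpacedLayout π x) (h : r ∈ openSegment ℝ (slant π x β p).1 (slant π x β p).2)
    (h' : r ∈ openSegment ℝ (slant π x (!β) p').1 (slant π x (!β) p').2) :
    π β p = π (!β) p' := by
  obtain ⟨hlow, hhigh⟩ := coord_of_mem_openSegment_slant_of_lt hp.lt h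
  obtain ⟨hlow', hhigh'⟩ := coord_not_of_mem_openSegment_slant h'
  rw [Bool.not_not] at hlow' hhigh'
  refine hx.injective β (le_antisymm (not_lt.1 fun hlt => ?_) (not_lt.1 fun hlt => ?_))
  · linarith [hp.le_of_lt _ hlt]
  · linarith [hx.gap _ _ _ hlt]

-- With a common head, each slant would have to be steeper than the other.
lemma Ascends.not_segCross_slant_of_ascends (hp : Ascends π x β p)
    (hp' : Ascends π x (!β) p') (hx : IsSpacedLayout π x) :
    ¬ SegCross (slant π x β p) (slant π x (!β) p') := by
  rintro ⟨r, h, h'⟩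
  have hhead : π (!β) p' = π β p := (hp.eq_of_mem_openSegment_slant hx h h').symm
  have hslope := slope_of_mem_slant (openSegment_subset_segment _ _ _ h)
  have hslope' := slope_of_mem_slant (openSegment_subset_segment _ _ _ h')
  obtain ⟨-, hpos⟩ := coord_of_mem_openSegment_slant_of_lt hp.lt h
  obtain ⟨-, hpos'⟩ := coord_of_mem_openSegment_slant_of_lt hp'.lt h'
  have hgap := hx.gap _ _ _ hp.lt
  have hgap' := hx.gap _ _ _ hp'.lt
  rw [Bool.not_not] at hslope'
  rw [hhead] at hslope' hpos' hgap'
  have hsteep : x (!β) (π β p) - coord (!β) r < x β (π β p) - coord β r := by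
    rw [hslope]
    exact lt_mul_of_one_lt_left (sub_pos.2 hpos') (by linarith)
  have hsteep' : x β (π β p) - coord β r < x (!β) (π β p) - coord (!β) r := by
    rw [hslope']
    exact lt_mul_of_one_lt_left (sub_pos.2 hpos) (by linarith)
  exact hsteep.not_gt hsteep'

lemma Closes.coord_mem_Icc_of_mem_slant (hp : Closes π x β p)
    (h : r ∈ segment ℝ (slant π x β p).1 (slant π x β p).2) :
    coord β r ∈ Set.Icc (x β (π β p)) (x β p) := by
  have hmem := coord_of_mem_slant h
  rwa [Set.uIcc_of_ge hp.le] at hmem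

lemma Ascends.not_segCross_slant_of_closes (hp : Ascends π x β p)
    (hp' : Closes π x (!β) p') (hx : IsSpacedLayout π x) :
    ¬ SegCross (slant π x β p) (slant π x (!β) p') := by
  rintro ⟨r, h, h'⟩
  obtain ⟨hlow', -⟩ := hp'.coord_mem_Icc_of_mem_slant (openSegment_subset_segment _ _ _ h')
  rw [← hp.eq_of_mem_openSegment_slant hx h h'] at hlow'
  exact hlow'.not_gt (coord_not_of_mem_openSegment_slant h).2

-- The head of the second arc lies below that of the first one in direction `!β`, so it cannot
-- belong to the interval of direction `β` that the cycle of `p` occupies.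
lemma Closes.not_segCross_slant_of_closes (hp : Closes π x β p) (hp' : Closes π x (!β) p')
    (hx : IsSpacedLayout π x) : ¬ SegCross (slant π x β p) (slant π x (!β) p') := by
  rintro ⟨r, h, h'⟩
  obtain ⟨hlow, hhigh⟩ := hp.coord_mem_Icc_of_mem_slant (openSegment_subset_segment _ _ _ h)
  obtain ⟨hlow', -⟩ := hp'.coord_mem_Icc_of_mem_slant (openSegment_subset_segment _ _ _ h')
  have hbelow : x (!β) (π (!β) p') < x (!β) (π β p) :=
    hlow'.trans_lt (coord_not_of_mem_openSegment_slant h).2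
  obtain ⟨hhead, hhead'⟩ := coord_not_of_mem_openSegment_slant h'
  rw [Bool.not_not] at hhead hhead'
  rcases lt_or_ge (x β p) (x β (π (!β) p')) with hout | hin
  · linarith [hx.gap _ _ _ hout]
  · exact (hp.isLowest _ (hp.sameCycle _ (hlow.trans_lt hhead').le hin)).not_gt hbelow

namespace IsSpacedLayout

lemma eq_of_mem_arm_of_mem_arm (hx : IsSpacedLayout π x)
    (h : r ∈ segment ℝ (arm π x β p).1 (arm π x β p).2)
    (h' : r ∈ segment ℝ (arm π x β p').1 (arm π x β p').2) : p = p' :=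
  hx.injective β ((coord_of_mem_arm h).symm.trans (coord_of_mem_arm h'))

lemma eq_of_mem_slant_of_mem_slant (hx : IsSpacedLayout π x)
    (h : r ∈ segment ℝ (slant π x β p).1 (slant π x β p).2)
    (h' : r ∈ segment ℝ (slant π x β p').1 (slant π x β p').2) : p = p' := by
  obtain ⟨hlow, hhigh⟩ := coord_not_of_mem_slant h
  obtain ⟨hlow', hhigh'⟩ := coord_not_of_mem_slant h'
  refine (π β).injective (hx.injective (!β)
    (le_antisymm (not_lt.1 fun hlt => ?_) (not_lt.1 fun hlt => ?_)))
  · linarith [hx.gap _ _ _ hlt]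
  · linarith [hx.gap _ _ _ hlt]

lemma eq_or_eq_of_mem_slant_of_mem_arm (hx : IsSpacedLayout π x)
    (h : r ∈ segment ℝ (slant π x β p).1 (slant π x β p).2)
    (h' : r ∈ segment ℝ (arm π x β p').1 (arm π x β p').2) : p' = p ∨ p' = π β p := by
  rcases hx.ascends_or_closes β p with hp | hp
  · have hmem := coord_of_mem_slant h
    rw [coord_of_mem_arm h', Set.uIcc_of_le hp.lt.le] at hmem
    rcases hmem.2.lt_or_eq with hlt | heq
    · exact Or.inl (hx.injective β (le_antisymm (hp.le_of_lt _ hlt) hmem.1))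
    · exact Or.inr (hx.injective β heq)
  · by_contra! hne
    have hmem := hp.coord_mem_Icc_of_mem_slant h
    rw [coord_of_mem_arm h'] at hmem
    have hcycle : (π β).SameCycle p p' := hp.sameCycle p' hmem.1 hmem.2
    have hbelow (w : V) (hw : (π β).SameCycle p w) (hwne : w ≠ π β p) :
        x (!β) (π β p) + 1 < x (!β) w :=
      hx.gap _ _ _ ((hp.isLowest w hw).lt_of_ne ((hx.injective _).ne hwne.symm))
    have htail := hbelow p' hcycle hne.2
    have hhead := hbelow (π β p') hcycle.apply_right ((π β).injective.ne hne.1)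
    have hhigh := (coord_not_of_mem_slant h).2
    rcases Set.mem_uIcc.1 (coord_not_of_mem_arm h') with hmem' | hmem' <;> linarith [hmem'.1]

lemma not_segCross_slant_arm (hx : IsSpacedLayout π x) (hp : π β p ≠ p) (hne : p' ≠ p) :
    ¬ SegCross (slant π x β p) (arm π x β p') := by
  rintro ⟨r, h, h'⟩
  have harm := openSegment_subset_segment _ _ _ h'
  obtain rfl := (hx.eq_or_eq_of_mem_slant_of_mem_arm
    (openSegment_subset_segment _ _ _ h) harm).resolve_left hne
  rcases ((hx.injective β).ne hp).lt_or_gt with hlt | hgt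
  · exact (coord_of_mem_openSegment_slant_of_gt hlt h).1.ne' (coord_of_mem_arm harm)
  · exact (coord_of_mem_openSegment_slant_of_lt hgt h).2.ne (coord_of_mem_arm harm)

lemma not_segCross_slant_arm_not (hx : IsSpacedLayout π x) :
    ¬ SegCross (slant π x β p) (arm π x (!β) p') := by
  rintro ⟨r, h, h'⟩
  obtain ⟨hlow, hhigh⟩ := coord_not_of_mem_openSegment_slant h
  rw [coord_of_mem_arm (openSegment_subset_segment _ _ _ h')] at hlow hhigh
  linarith [hx.gap _ _ _ hhigh]

lemma not_segCross_slant_slant_not (hx : IsSpacedLayout π x) :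
    ¬ SegCross (slant π x β p) (slant π x (!β) p') := by
  rcases hx.ascends_or_closes β p with hp | hp <;>
    rcases hx.ascends_or_closes (!β) p' with hp' | hp'
  · exact hp.not_segCross_slant_of_ascends hp' hx
  · exact hp.not_segCross_slant_of_closes hp' hx
  · rw [← Bool.not_not β] at hp ⊢
    rw [Bool.not_not (!β)]
    exact fun h => hp'.not_segCross_slant_of_closes hp hx (segCross_symm h)
  · exact hp.not_segCross_slant_of_closes hp' hx

lemma disjoint_curve_arc (hx : IsSpacedLayout π x) (hne : p ≠ p') (hhead : π β p ≠ p')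
    (hhead' : π β p' ≠ p) : Disjoint (arc π x β p).curve (arc π x β p').curve := by
  rw [Set.disjoint_left, curve_arc, curve_arc]
  rintro r (h | h) (h' | h')
  · exact hne (hx.eq_of_mem_arm_of_mem_arm h h')
  · exact (hx.eq_or_eq_of_mem_slant_of_mem_arm h' h).elim hne hhead'.symm
  · exact (hx.eq_or_eq_of_mem_slant_of_mem_arm h h').elim hne.symm hhead.symm
  · exact hne (hx.eq_of_mem_slant_of_mem_slant h h')

variable {s t : (ℝ × ℝ) × (ℝ × ℝ)}

lemma not_segCross_arc_arc (hx : IsSpacedLayout π x) (hp : π β p ≠ p) (hp' : π β p' ≠ p')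
    (hne : p ≠ p') (hs : s ∈ (arc π x β p).segs) (ht : t ∈ (arc π x β p').segs) :
    ¬ SegCross s t := by
  rw [segs_arc] at hs ht
  rcases hs with rfl | rfl <;> rcases ht with rfl | rfl
  · rintro ⟨r, h, h'⟩
    exact hne (hx.eq_of_mem_arm_of_mem_arm (openSegment_subset_segment _ _ _ h)
      (openSegment_subset_segment _ _ _ h'))
  · exact fun h => hx.not_segCross_slant_arm hp' hne (segCross_symm h)
  · exact hx.not_segCross_slant_arm hp hne.symm
  · rintro ⟨r, h, h'⟩
    exact hne (hx.eq_of_mem_slant_of_mem_slant (openSegment_subset_segment _ _ _ h)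
      (openSegment_subset_segment _ _ _ h'))

lemma segPerp_of_segCross_arc_arc_not (hx : IsSpacedLayout π x)
    (hs : s ∈ (arc π x β p).segs) (ht : t ∈ (arc π x (!β) p').segs) (h : SegCross s t) :
    SegPerp s t := by
  rw [segs_arc] at hs ht
  rcases hs with rfl | rfl <;> rcases ht with rfl | rfl
  · exact segPerp_arm_arm_not
  · refine absurd (segCross_symm h) ?_
    simpa only [Bool.not_not] using hx.not_segCross_slant_arm_not (β := !β)
  · exact absurd h hx.not_segCross_slant_arm_not
  · exact absurd h hx.not_segCross_slant_slant_not

lemma segPerp_of_segCross (hx : IsSpacedLayout π x) {β' : Bool} (hp : π β p ≠ p)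
    (hp' : π β' p' ≠ p') (hne : β = β' → p ≠ p') (hs : s ∈ (arc π x β p).segs)
    (ht : t ∈ (arc π x β' p').segs) (h : SegCross s t) : SegPerp s t := by
  rcases Bool.eq_or_eq_not β' β with rfl | rfl
  · exact absurd h (hx.not_segCross_arc_arc hp hp' (hne rfl) hs ht)
  · exact hx.segPerp_of_segCross_arc_arc_not hs ht h

end IsSpacedLayout

end Crossing

lemma exists_isSpacedLayout_on_grid {V : Type*} [Fintype V] (π : Bool → Perm V) :
    ∃ x : Bool → V → ℝ, IsSpacedLayout π x ∧
      ∀ β v, ∃ k : ℤ, x β v = k ∧ 2 ≤ k ∧ k ≤ 2 * Fintype.card V := by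
  obtain ⟨rank, hrank⟩ := exists_isCyclicLayout_fin π
  have hle (β : Bool) (v w : V) :
      (2 * (rank β v : ℕ) + 2 : ℝ) ≤ 2 * (rank β w : ℕ) + 2 ↔ rank β v ≤ rank β w := by
    rw [add_le_add_iff_right, mul_le_mul_iff_right₀ two_pos, Nat.cast_le, Fin.val_fin_le]
  refine ⟨fun β v => 2 * (rank β v : ℕ) + 2, ⟨hrank.congr hle, fun β v w h => ?_⟩, fun β v => ?_⟩
  · have hlt : (rank β v : ℕ) < rank β w := lt_of_not_ge fun hge => h.not_ge ((hle β w v).2 hge)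
    have hsucc : ((rank β v : ℕ) : ℝ) + 1 ≤ (rank β w : ℕ) := by exact_mod_cast hlt
    linarith
  · have hlt : (rank β v : ℕ) < Fintype.card V := (rank β v).isLt
    exact ⟨2 * (rank β v : ℕ) + 2, by push_cast; ring, by lia, by lia⟩

/-! ### The drawing -/

section Drawing

variable {V : Type}

/-- The edge `e` of `G i` can be drawn as the arc of direction `dir i` from `tail i e`: it joins
this vertex to its image under `π (dir i)`, different edges drawn in the same direction have
different tails, and no vertex is both a head and a tail of edges of the same graph. -/
structure IsArcAssignment {ι : Type*} (G : ι → SimpleGraph V) (π : Bool → Perm V)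
    (dir : ι → Bool) (tail : ι → Sym2 V → V) : Prop where
  mk_tail_head : ∀ i, ∀ e ∈ (G i).edgeSet, s(tail i e, π (dir i) (tail i e)) = e
  tail_ne_tail : ∀ i, ∀ e ∈ (G i).edgeSet, ∀ j, ∀ e' ∈ (G j).edgeSet, (i ≠ j ∨ e ≠ e') →
    dir i = dir j → tail i e ≠ tail j e'
  head_ne_tail : ∀ i, ∀ e ∈ (G i).edgeSet, ∀ f ∈ (G i).edgeSet, π (dir i) (tail i e) ≠ tail i f

-- The first component of `label i` is the direction of `G i`; the second one is the colour of the
-- tails of its edges in the alternating orientation of the two graphs of that direction.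
lemma exists_isArcAssignment [Finite V] {ι : Type*} {G : ι → SimpleGraph V}
    (hG : ∀ i, IsMatchingGraph (G i)) (label : ι ≃ Bool × Bool) :
    ∃ π tail, IsArcAssignment G π (fun i => (label i).1) tail := by
  choose π c hc using fun β => exists_alternating_orientation fun b => hG (label.symm (β, b))
  have htail (i : ι) (e : Sym2 V) : ∃ p, e ∈ (G i).edgeSet → s(p, π (label i).1 p) = e ∧
      c (label i).1 p = (label i).2 ∧ c (label i).1 (π (label i).1 p) = !(label i).2 := by
    induction e with | _ u v =>
    by_cases huv : (G i).Adj u v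
    · have hadj : (G (label.symm ((label i).1, (label i).2))).Adj u v := by simpa using huv
      obtain ⟨hflip, hstep⟩ := hc _ _ _ _ hadj
      obtain ⟨-, hstep'⟩ := hc _ _ _ _ hadj.symm
      rcases Bool.eq_or_eq_not (c (label i).1 u) (label i).2 with hu | hu
      · exact ⟨u, fun _ => by simp [hstep hu, hu, hflip]⟩
      · exact ⟨v, fun _ => by simp [hstep' (by simp [hflip, hu]), hu, hflip, Sym2.eq_swap]⟩
    · exact ⟨u, fun h => absurd h huv⟩
  choose tail htail using htail
  refine ⟨π, tail, fun i e he => (htail i e he).1, fun i e he j e' he' hne hdir heq => ?_,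
    fun i e he e' he' heq => ?_⟩
  · obtain ⟨hmk, hcol, -⟩ := htail i e he
    obtain ⟨hmk', hcol', -⟩ := htail j e' he'
    have hside : (label i).2 = (label j).2 := by rw [← hcol, ← hcol', heq, hdir]
    obtain rfl : i = j := label.injective (Prod.ext hdir hside)
    exact hne.elim (· rfl) (· (by rw [← hmk, ← hmk', heq]))
  · have hhead := (htail i e he).2.2
    rw [heq, (htail i e' he').2.1] at hhead
    exact Bool.self_ne_not _ hhead

variable {m : ℕ} {G : Fin m → SimpleGraph V} {π : Bool → Perm V} {x : Bool → V → ℝ}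
  {dir : Fin m → Bool} {tail : Fin m → Sym2 V → V}

/-- The simultaneous drawing by the arcs of a spaced layout. -/
def arcDrawing (hx : IsSpacedLayout π x) (htail : IsArcAssignment G π dir tail) :
    SimDrawing G where
  pos := vertexPt x
  pos_injective _ _ h := hx.injective false (congrArg Prod.fst h)
  poly i e := arc π x (dir i) (tail i e)
  joins i a b hab := by
    rcases Sym2.eq_iff.1 (htail.mk_tail_head i s(a, b) hab) with ⟨ha, hb⟩ | ⟨hb, ha⟩
    · exact Or.inl ⟨congrArg (vertexPt x) ha, congrArg (vertexPt x) hb⟩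
    · exact Or.inr ⟨congrArg (vertexPt x) hb, congrArg (vertexPt x) ha⟩

lemma isRacSim_arcDrawing (hx : IsSpacedLayout π x) (htail : IsArcAssignment G π dir tail) :
    (arcDrawing hx htail).IsRacSim := by
  have hperp (i : Fin m) (e) (he : e ∈ (G i).edgeSet) (j : Fin m) (e') (he' : e' ∈ (G j).edgeSet)
      (hne : i ≠ j ∨ e ≠ e') (s) (hs : s ∈ (arc π x (dir i) (tail i e)).segs) (t)
      (ht : t ∈ (arc π x (dir j) (tail j e')).segs) : SegCross s t → SegPerp s t :=
    hx.segPerp_of_segCross (htail.head_ne_tail i e he e he) (htail.head_ne_tail j e' he' e' he')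
      (htail.tail_ne_tail i e he j e' he' hne) hs ht
  refine ⟨fun i e he e' he' hne => ?_, fun i e he j e' he' hne s hs t ht => ?_,
    fun i j hij e he e' he' => hperp i e he j e' he' (Or.inl hij)⟩
  · have hdisj : Disjoint (arc π x (dir i) (tail i e)).curve (arc π x (dir i) (tail i e')).curve :=
      hx.disjoint_curve_arc (htail.tail_ne_tail i e he i e' he' (Or.inr hne) rfl)
        (htail.head_ne_tail i e he e' he') (htail.head_ne_tail i e' he' e he)
    exact (Set.disjoint_iff.1 hdisj).trans (Set.empty_subset _)
  · exact subsingleton_inter_of_segPerp_of_segCross (hperp i e he j e' he' hne s hs t ht)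

lemma onGrid_arcDrawing (hx : IsSpacedLayout π x) (htail : IsArcAssignment G π dir tail) {N : ℤ}
    (hN : ∀ β v, ∃ k : ℤ, x β v = k ∧ 2 ≤ k ∧ k ≤ N) : (arcDrawing hx htail).OnGrid N N := by
  have hvertex (v : V) : OnGridPt N N (vertexPt x v) := onGridPt_of_coord fun β => by
    obtain ⟨k, hk, hk2, hkN⟩ := hN β v
    exact ⟨k, by rw [coord_vertexPt, hk], by lia, hkN⟩
  have hbend (β : Bool) (p : V) : OnGridPt N N (bendPt π x β p) :=
    onGridPt_of_coord <| (Bool.forall_bool' β).2 ⟨by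
      obtain ⟨k, hk, hk2, hkN⟩ := hN β p
      exact ⟨k, by rw [coord_bendPt, hk], by lia, hkN⟩, by
      obtain ⟨k, hk, hk2, hkN⟩ := hN (!β) (π β p)
      exact ⟨k - 1, by rw [coord_not_bendPt, hk, Int.cast_sub, Int.cast_one], by lia, by lia⟩⟩
  refine ⟨hvertex, fun i e _ => ?_⟩
  change ∀ k : Fin 3, OnGridPt N N (![vertexPt x _, bendPt π x _ _, vertexPt x _] k)
  exact Fin.forall_fin_succ.2 ⟨hvertex _, Fin.forall_fin_two.2 ⟨hbend _ _, hvertex _⟩⟩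

lemma bendsAtMost_arcDrawing (hx : IsSpacedLayout π x) (htail : IsArcAssignment G π dir tail)
    (i : Fin m) : (arcDrawing hx htail).BendsAtMost i 1 :=
  fun _ _ => le_rfl

end Drawing

end RacSim

/-- Four matchings on a common set of `n` vertices admit a RacSim drawing on an
integer grid of size `2n × 2n` with at most one bend per edge. -/
theorem racsim_four_matchings {V : Type} [Fintype V] (n : ℕ)
    (hcard : Fintype.card V = n) (M₁ M₂ M₃ M₄ : SimpleGraph V)
    (h₁ : IsMatchingGraph M₁) (h₂ : IsMatchingGraph M₂)
    (h₃ : IsMatchingGraph M₃) (h₄ : IsMatchingGraph M₄) :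
    ∃ D : SimDrawing ![M₁, M₂, M₃, M₄], D.IsRacSim ∧
      D.OnGrid (2 * (n : ℤ)) (2 * (n : ℤ)) ∧
      ∀ i : Fin 4, D.BendsAtMost i 1 := by
  have hM : ∀ i, IsMatchingGraph (![M₁, M₂, M₃, M₄] i) := by
    simp [Fin.forall_fin_succ, h₁, h₂, h₃, h₄]
  have label : Fin 4 ≃ Bool × Bool := (Fintype.equivFinOfCardEq (by simp)).symm
  obtain ⟨π, tail, htail⟩ := RacSim.exists_isArcAssignment hM label
  obtain ⟨x, hx, hgrid⟩ := RacSim.exists_isSpacedLayout_on_grid π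
  rw [hcard] at hgrid
  exact ⟨RacSim.arcDrawing hx htail, RacSim.isRacSim_arcDrawing hx htail,
    RacSim.onGrid_arcDrawing hx htail hgrid, RacSim.bendsAtMost_arcDrawing hx htail⟩
end
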